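/- arXiv:1909.06315 — 3 statements merged into one kernel-verified Lean document; each statement's English description precedes it below -/
import Mathlib

section
/- For every n ≥ 1 and every h ∈ (0,n) there exist sequences (a_k)_{k∈ℕ} in ℝⁿ and (r_k)_{k∈ℕ} in (0,1) such that the contracting similarities φ_k(x) = a_k + r_k·x map the closed unit ball B̄(0,1) ⊆ ℝⁿ into itself, the images φ_k(B̄(0,1)) are pairwise disjoint (Strong Separation Condition), the limit set J = { lim_{m→∞} φ_{ω₁}∘⋯∘φ_{ω_m}(0) : ω ∈ ℕ^ℕ } has Hausdorff dimension equal to h, and there exists a point ξ ∈ closure(J) at which J is not porous. -/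
/-!
The system consists of tiny disjoint balls accumulating at the origin only.

*The balls.* For small `c`, Vitali's covering lemma, applied to all balls `B(x, c ‖x‖ ^ 2)` with
`0 < ‖x‖ ≤ 1 / 2`, gives a sequence of disjoint balls with centres `a k` and radii
`R k = c ‖a k‖ ^ 2` whose fivefold enlargements cover the punctured ball (`exists_vitali`).
Comparing volumes, `∑ R k ^ n ≥ 10⁻ⁿ`; since `R k ≤ c` and `h < n`, this makes
`∑ R k ^ h ≥ 10⁻ⁿ c ^ (h - n) > 1` once `c` is small (`exists_one_lt_sum`). The radii can therefore
be decreased to `r k ≤ R k` with `∑ r k ^ h = 1` (`exists_weights`).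

*Non-porosity.* Every `x ≠ 0` near `0` is within `5 R k` of some `a k`, hence within `‖x‖ ^ 2` of
the limit set `J`, so a ball in `B(0, r) \ J` has radius at most `r ^ 2` (`not_porousAt_zero`).

*Dimension.* Because `∑ r k ^ h = 1`, the cylinders of each generation have bounded total
`h`-dimensional content, which gives `dimH J ≤ h` (`dimH_le_of_hasSum`). For `s < h`, finitely many
indices satisfy `∑ r k ^ s > 1`. Expanding `t ∈ [0, 1)` in the digits given by consecutive
subintervals of lengths `r k ^ s`, and sending it to the point of `J` with this code, gives a map
`g` with `|t - t'| ≤ C * dist (g t) (g t') ^ s`, by the uniform separation of finitely many images.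
Its inverse is an `s`-Hölder map of a subset of `J` onto `[0, 1)`, so `dimH J ≥ s`
(`le_dimH_of_lt_sum`). No measure on `J` is needed.
-/


open Metric Set Filter

/-- `por A x r` is the porosity of the set `A` at the point `x` at scale `r`:
the supremum of all `c ≥ 0` such that some open ball of radius `c·r` is contained
in `B(x,r) ∖ A`. -/
noncomputable def por {X : Type*} [MetricSpace X] (A : Set X) (x : X) (r : ℝ) : ℝ :=
  sSup {c : ℝ | 0 ≤ c ∧ ∃ y : X, Metric.ball y (c * r) ⊆ Metric.ball x r \ A}

/-- `A` is porous at the point `x`. -/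
def PorousAt {X : Type*} [MetricSpace X] (A : Set X) (x : X) : Prop :=
  ∃ c ∈ Set.Ioo (0 : ℝ) 1, ∃ r₀ > (0 : ℝ), ∀ r ∈ Set.Ioo (0 : ℝ) r₀, c ≤ por A x r

/-- `A` is porous. -/
def Porous {X : Type*} [MetricSpace X] (A : Set X) : Prop :=
  ∃ c ∈ Set.Ioo (0 : ℝ) 1, ∃ r₀ > (0 : ℝ), ∀ x ∈ A, ∀ r ∈ Set.Ioo (0 : ℝ) r₀, c ≤ por A x r

/-- The limit set of the countable similarity IFS `φ_k x = a k + r k • x`: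
points of the form `lim_{m→∞} φ_{ω₁} ∘ ⋯ ∘ φ_{ω_m} 0` for sequences `ω : ℕ → ℕ`. -/
def simLimitSet {n : ℕ} (a : ℕ → EuclideanSpace ℝ (Fin n)) (r : ℕ → ℝ) :
    Set (EuclideanSpace ℝ (Fin n)) :=
  {x | ∃ ω : ℕ → ℕ, Filter.Tendsto
    (fun m => (List.ofFn fun i : Fin m => ω i).foldr
      (fun k g => (fun y => a k + r k • y) ∘ g) id 0)
    Filter.atTop (nhds x)}

/-! ### The coding map of the system -/

section Coding

variable {n : ℕ} {a : ℕ → EuclideanSpace ℝ (Fin n)} {r : ℕ → ℝ} {ρ : ℝ}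

/-- The point `φ_{ω₀} ∘ ⋯ ∘ φ_{ω_{m-1}} 0`. -/
noncomputable def wordPoint (a : ℕ → EuclideanSpace ℝ (Fin n)) (r : ℕ → ℝ) (ω : ℕ → ℕ) (m : ℕ) :
    EuclideanSpace ℝ (Fin n) :=
  (List.ofFn fun i : Fin m => ω i).foldr (fun k g => (fun y => a k + r k • y) ∘ g) id 0

lemma wordPoint_succ (ω : ℕ → ℕ) (m : ℕ) :
    wordPoint a r ω (m + 1) = a (ω 0) + r (ω 0) • wordPoint a r (fun i => ω (i + 1)) m := by
  simp [wordPoint, List.ofFn_succ]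

lemma norm_wordPoint_le (hr : ∀ k, 0 < r k) (hb : ∀ k, ‖a k‖ + r k ≤ 1) (ω : ℕ → ℕ) (m : ℕ) :
    ‖wordPoint a r ω m‖ ≤ 1 := by
  induction m generalizing ω with
  | zero => simp [wordPoint]
  | succ m ih =>
    rw [wordPoint_succ]
    refine (norm_add_le _ _).trans ?_
    rw [norm_smul, Real.norm_of_nonneg (hr _).le]
    have := mul_le_mul_of_nonneg_left (ih fun i => ω (i + 1)) (hr (ω 0)).le
    linarith [hb (ω 0)]

lemma dist_wordPoint_le (hr : ∀ k, 0 < r k) (hρ : ∀ k, r k ≤ ρ)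
    (hb : ∀ k, ‖a k‖ + r k ≤ 1) (ω : ℕ → ℕ) (m : ℕ) :
    dist (wordPoint a r ω m) (wordPoint a r ω (m + 1)) ≤ 1 * ρ ^ m := by
  induction m generalizing ω with
  | zero =>
    have : wordPoint a r ω 0 = 0 := by simp [wordPoint]
    rw [this, dist_zero_left]
    simpa using norm_wordPoint_le hr hb ω 1
  | succ m ih =>
    rw [wordPoint_succ ω m, wordPoint_succ ω (m + 1), dist_add_left, dist_smul₀,
      Real.norm_of_nonneg (hr _).le, pow_succ']
    have h1 := ih fun i => ω (i + 1)
    have h0 := (hr (ω 0)).le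
    calc _ ≤ r (ω 0) * (1 * ρ ^ m) := by gcongr
      _ ≤ ρ * (1 * ρ ^ m) := by
        have : 0 ≤ ρ := h0.trans (hρ _)
        gcongr
        exact hρ _
      _ = _ := by ring

/-- The coding map `π` of the system: it takes values in the limit set, parametrizes all of it,
and intertwines the shift with the maps `φ_k`. -/
lemma exists_coding (hr : ∀ k, 0 < r k) (hρ : ∀ k, r k ≤ ρ) (hρ1 : ρ < 1)
    (hb : ∀ k, ‖a k‖ + r k ≤ 1) :
    ∃ π : (ℕ → ℕ) → EuclideanSpace ℝ (Fin n), simLimitSet a r = range π ∧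
      (∀ ω, ‖π ω‖ ≤ 1) ∧ ∀ ω, π ω = a (ω 0) + r (ω 0) • π (fun i => ω (i + 1)) := by
  have hlim : ∀ ω, ∃ x, Tendsto (wordPoint a r ω) atTop (nhds x) := fun ω =>
    cauchySeq_tendsto_of_complete
      (cauchySeq_of_le_geometric ρ 1 hρ1 (dist_wordPoint_le hr hρ hb ω))
  choose π hπ using hlim
  refine ⟨π, ?_, fun ω => ?_, fun ω => ?_⟩
  · ext x
    constructor
    · rintro ⟨ω, hω⟩
      exact ⟨ω, tendsto_nhds_unique (hπ ω) hω⟩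
    · rintro ⟨ω, rfl⟩
      exact ⟨ω, hπ ω⟩
  · exact le_of_tendsto (hπ ω).norm (Eventually.of_forall (norm_wordPoint_le hr hb ω))
  · refine tendsto_nhds_unique ((tendsto_add_atTop_iff_nat 1).2 (hπ ω)) ?_
    simp_rw [wordPoint_succ]
    exact ((hπ _).const_smul _).const_add _

lemma norm_le_one_of_mem_simLimitSet (hr : ∀ k, 0 < r k) (hρ : ∀ k, r k ≤ ρ) (hρ1 : ρ < 1)
    (hb : ∀ k, ‖a k‖ + r k ≤ 1) {x : EuclideanSpace ℝ (Fin n)} (hx : x ∈ simLimitSet a r) :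
    ‖x‖ ≤ 1 := by
  obtain ⟨π, hJ, h1, -⟩ := exists_coding hr hρ hρ1 hb
  rw [hJ] at hx
  obtain ⟨ω, rfl⟩ := hx
  exact h1 ω

lemma exists_mem_simLimitSet_near (hr : ∀ k, 0 < r k) (hρ : ∀ k, r k ≤ ρ) (hρ1 : ρ < 1)
    (hb : ∀ k, ‖a k‖ + r k ≤ 1) (k : ℕ) : ∃ x ∈ simLimitSet a r, dist x (a k) ≤ r k := by
  obtain ⟨π, hJ, h1, h2⟩ := exists_coding hr hρ hρ1 hb
  refine ⟨π (fun _ => k), hJ ▸ mem_range_self _, ?_⟩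
  rw [h2, dist_self_add_left, norm_smul, Real.norm_of_nonneg (hr _).le]
  exact mul_le_of_le_one_right (hr k).le (h1 _)

/-! ### Upper bound for the dimension -/

/-- The cylinders of generation `m`, re-indexed by `ℕ`, cover the limit set; their total
`h`-dimensional content does not depend on `m` because `∑ r_k ^ h = 1`. -/
lemma exists_cover (hr : ∀ k, 0 < r k) (hρ : ∀ k, r k ≤ ρ) (hρ1 : ρ < 1)
    (hb : ∀ k, ‖a k‖ + r k ≤ 1) {h : ℝ} (hh : 0 < h) (hs : HasSum (fun k => r k ^ h) 1) (m : ℕ) :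
    ∃ t : ℕ → Set (EuclideanSpace ℝ (Fin n)), simLimitSet a r ⊆ ⋃ i, t i ∧
      (∀ i, ediam (t i) ≤ ENNReal.ofReal (2 * ρ ^ m)) ∧
      ∑' i, ediam (t i) ^ h ≤ (2 : ENNReal) ^ h := by
  induction m with
  | zero =>
    have hd : ediam (closedBall (0 : EuclideanSpace ℝ (Fin n)) 1) ≤ 2 := by
      rw [← closedEBall_ofReal zero_le_one]
      refine ediam_closedEBall_le.trans ?_
      simp
    refine ⟨fun i => if i = 0 then closedBall 0 1 else ∅, fun x hx => ?_, fun i => ?_, ?_⟩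
    · refine mem_iUnion.2 ⟨0, ?_⟩
      simpa using norm_le_one_of_mem_simLimitSet hr hρ hρ1 hb hx
    · by_cases hi : i = 0
      · simpa [hi] using hd
      · simp [hi]
    · rw [tsum_eq_single 0]
      · simp only [if_true]
        gcongr
      · intro i hi
        simp [hi, hh]
  | succ m ih =>
    obtain ⟨t, hcov, hdiam, hsum⟩ := ih
    have hsc : ∀ k i, ediam ((fun y => a k + r k • y) '' t i) ≤
        ENNReal.ofReal (r k) * ediam (t i) := fun k i => by
      have hl : LipschitzWith (Real.toNNReal (r k))
          (fun y : EuclideanSpace ℝ (Fin n) => a k + r k • y) :=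
        LipschitzWith.of_dist_le_mul fun x y => by
          rw [dist_add_left, dist_smul₀, Real.norm_of_nonneg (hr _).le,
            Real.coe_toNNReal _ (hr k).le]
      exact hl.ediam_image_le _
    refine ⟨fun j => (fun y => a (Nat.unpair j).1 + r (Nat.unpair j).1 • y) ''
      t (Nat.unpair j).2, ?_, fun j => ?_, ?_⟩
    · intro x hx
      obtain ⟨π, hJ, -, h2⟩ := exists_coding hr hρ hρ1 hb
      rw [hJ] at hx hcov
      obtain ⟨ω, rfl⟩ := hx
      obtain ⟨i, hi⟩ := mem_iUnion.1 (hcov (mem_range_self fun i => ω (i + 1)))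
      refine mem_iUnion.2 ⟨Nat.pair (ω 0) i, ?_⟩
      simp only [Nat.unpair_pair]
      exact ⟨_, hi, (h2 ω).symm⟩
    · refine (hsc _ _).trans ?_
      calc _ ≤ ENNReal.ofReal ρ * ENNReal.ofReal (2 * ρ ^ m) := by
            gcongr
            · exact hρ _
            · exact hdiam _
        _ = _ := by
            rw [← ENNReal.ofReal_mul ((hr 0).le.trans (hρ 0))]
            congr 1; ring
    · have hone : ∑' k, ENNReal.ofReal (r k) ^ h = 1 := by
        have : ∀ k, ENNReal.ofReal (r k) ^ h = ENNReal.ofReal (r k ^ h) := fun k =>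
          ENNReal.ofReal_rpow_of_pos (hr k)
        simp_rw [this]
        rw [← ENNReal.ofReal_tsum_of_nonneg (fun k => Real.rpow_nonneg (hr k).le _) hs.summable,
          hs.tsum_eq, ENNReal.ofReal_one]
      calc _ ≤ ∑' j : ℕ, (ENNReal.ofReal (r (Nat.unpair j).1) * ediam (t (Nat.unpair j).2)) ^ h :=
            ENNReal.tsum_le_tsum fun j => ENNReal.rpow_le_rpow (hsc _ _) hh.le
        _ = ∑' p : ℕ × ℕ, ENNReal.ofReal (r p.1) ^ h * ediam (t p.2) ^ h := by
            rw [← Nat.pairEquiv.symm.tsum_eq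
              (fun p : ℕ × ℕ => ENNReal.ofReal (r p.1) ^ h * ediam (t p.2) ^ h)]
            refine tsum_congr fun j => ?_
            rw [ENNReal.mul_rpow_of_nonneg _ _ hh.le]
            rfl
        _ = (∑' k, ENNReal.ofReal (r k) ^ h) * ∑' i, ediam (t i) ^ h := by
            rw [ENNReal.tsum_prod', ← ENNReal.tsum_mul_right]
            simp_rw [ENNReal.tsum_mul_left]
        _ ≤ _ := by rw [hone, one_mul]; exact hsum

lemma dimH_le_of_hasSum (hr : ∀ k, 0 < r k) (hρ : ∀ k, r k ≤ ρ) (hρ1 : ρ < 1)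
    (hb : ∀ k, ‖a k‖ + r k ≤ 1) {h : ℝ} (hh : 0 < h) (hs : HasSum (fun k => r k ^ h) 1) :
    dimH (simLimitSet a r) ≤ ENNReal.ofReal h := by
  choose t hcov hdiam hsum using exists_cover hr hρ hρ1 hb hh hs
  refine dimH_le_of_hausdorffMeasure_ne_top (d := Real.toNNReal h) ?_
  rw [Real.coe_toNNReal _ hh.le]
  have hlim : Tendsto (fun m : ℕ => ENNReal.ofReal (2 * ρ ^ m)) atTop (nhds 0) := by
    have := (tendsto_pow_atTop_nhds_zero_of_lt_one ((hr 0).le.trans (hρ 0)) hρ1).const_mul 2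
    simpa using ENNReal.tendsto_ofReal this
  have key := MeasureTheory.Measure.hausdorffMeasure_le_liminf_tsum h (simLimitSet a r)
    (fun m : ℕ => ENNReal.ofReal (2 * ρ ^ m)) hlim t (Eventually.of_forall hdiam)
    (Eventually.of_forall hcov)
  refine ne_top_of_le_ne_top (b := (2 : ENNReal) ^ h)
    (ENNReal.rpow_ne_top_of_nonneg hh.le (by simp)) (key.trans ?_)
  refine (liminf_le_liminf (Eventually.of_forall hsum)).trans ?_
  simp

end Coding

/-! ### Lower bound for the dimension -/

section Lower

/-- Partition `[0, ∑ p)` into consecutive intervals of lengths `p 0, …, p (N - 1)`. Every `t` in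
`[0, 1)` lies in one of them; `d t` is its index, and `T t` its rescaled position. On each interval
`T` expands by `1 / p`. -/
lemma exists_expanding_map (p : ℕ → ℝ) (hp : ∀ k, 0 < p k) (N : ℕ)
    (hN : 1 < ∑ k ∈ Finset.range N, p k) :
    ∃ (d : ℝ → ℕ) (T : ℝ → ℝ) (q : ℕ → ℝ), ∀ t ∈ Ico (0 : ℝ) 1,
      d t < N ∧ T t ∈ Ico (0 : ℝ) 1 ∧ t = q (d t) + p (d t) * T t := by
  have key : ∀ t ∈ Ico (0 : ℝ) 1, ∃ k < N, ∑ i ∈ Finset.range k, p i ≤ t ∧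
      t < ∑ i ∈ Finset.range (k + 1), p i := by
    intro t ht
    have hex : ∃ k, t < ∑ i ∈ Finset.range k, p i := ⟨N, ht.2.trans hN⟩
    classical
    obtain ⟨k, hk⟩ : ∃ k, Nat.find hex = k + 1 := by
      refine Nat.exists_eq_succ_of_ne_zero fun h0 => ?_
      have := Nat.find_spec hex
      rw [h0] at this
      simp only [Finset.range_zero, Finset.sum_empty] at this
      exact absurd ht.1 (not_le.2 this)
    have h1 : Nat.find hex ≤ N := Nat.find_min' hex (ht.2.trans hN)
    refine ⟨k, by omega, not_lt.1 (Nat.find_min hex (by omega)), ?_⟩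
    rw [← hk]
    exact Nat.find_spec hex
  choose! d hd using key
  refine ⟨d, fun t => (t - ∑ i ∈ Finset.range (d t), p i) / p (d t),
    fun k => ∑ i ∈ Finset.range k, p i, fun t ht => ?_⟩
  obtain ⟨h1, h2, h3⟩ := hd t ht
  have hpos := hp (d t)
  rw [Finset.sum_range_succ] at h3
  refine ⟨h1, ⟨div_nonneg (by linarith) hpos.le, ?_⟩, ?_⟩
  · rw [div_lt_one hpos]; linarith
  · field_simp
    ring

/-- A map on `[0, 1)` that does not contract distances to the power `s` by more than a constant
has an image of dimension at least `s`, because its inverse is `s`-Hölder. -/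
lemma le_dimH_of_inverse_holder {X : Type*} [MetricSpace X] (g : ℝ → X) {s C : ℝ} (hs : 0 < s)
    (hC : 0 ≤ C)
    (hg : ∀ t ∈ Ico (0 : ℝ) 1, ∀ t' ∈ Ico (0 : ℝ) 1, |t - t'| ≤ C * dist (g t) (g t') ^ s) :
    ENNReal.ofReal s ≤ dimH (g '' Ico (0 : ℝ) 1) := by
  have hinj : InjOn g (Ico (0 : ℝ) 1) := by
    intro t ht t' ht' h
    have := hg t ht t' ht'
    rw [h, dist_self, Real.zero_rpow hs.ne', mul_zero] at this
    exact sub_eq_zero.1 (abs_nonpos_iff.1 this)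
  have hleft := hinj.leftInvOn_invFunOn
  have hhold : HolderOnWith (Real.toNNReal C) (Real.toNNReal s)
      (Function.invFunOn g (Ico (0 : ℝ) 1)) (g '' Ico (0 : ℝ) 1) := by
    rintro _ ⟨t, ht, rfl⟩ _ ⟨t', ht', rfl⟩
    rw [hleft ht, hleft ht', Real.coe_toNNReal _ hs.le, edist_dist, edist_dist,
      ENNReal.ofReal_rpow_of_nonneg dist_nonneg hs.le, Real.dist_eq]
    change _ ≤ ENNReal.ofReal C * _
    rw [← ENNReal.ofReal_mul hC]
    exact ENNReal.ofReal_le_ofReal (hg t ht t' ht')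
  have hdim := hhold.dimH_image_le (Real.toNNReal_pos.2 hs)
  rw [hleft.image_image, Real.dimH_of_nonempty_interior (by simp)] at hdim
  have hs0 : ENNReal.ofReal s ≠ 0 := by simpa using hs
  change _ ≤ _ / ENNReal.ofReal s at hdim
  rw [ENNReal.le_div_iff_mul_le (Or.inl hs0) (Or.inl ENNReal.ofReal_ne_top)] at hdim
  simpa using hdim

variable {n : ℕ} {a : ℕ → EuclideanSpace ℝ (Fin n)} {r : ℕ → ℝ} {ρ : ℝ}

/-- Finitely many of the disjoint images are uniformly separated. -/
lemma exists_separation (hr : ∀ k, 0 < r k)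
    (hsep : ∀ k l, k ≠ l → r k + r l < dist (a k) (a l)) (N : ℕ) :
    ∃ δ > 0, ∀ k < N, ∀ l < N, k ≠ l → ∀ x y : EuclideanSpace ℝ (Fin n), ‖x‖ ≤ 1 → ‖y‖ ≤ 1 →
      δ ≤ dist (a k + r k • x) (a l + r l • y) := by
  have hgap : ∃ δ > 0, ∀ p ∈ (Finset.range N ×ˢ Finset.range N).filter (fun p => p.1 ≠ p.2),
      δ ≤ dist (a p.1) (a p.2) - (r p.1 + r p.2) := by
    set P := (Finset.range N ×ˢ Finset.range N).filter (fun p => p.1 ≠ p.2)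
    rcases P.eq_empty_or_nonempty with h | h
    · exact ⟨1, one_pos, by simp [h]⟩
    · obtain ⟨p, hp, hmin⟩ := P.exists_min_image
        (fun p => dist (a p.1) (a p.2) - (r p.1 + r p.2)) h
      exact ⟨_, sub_pos.2 (hsep _ _ (Finset.mem_filter.1 hp).2), hmin⟩
  obtain ⟨δ, hδ, h⟩ := hgap
  refine ⟨δ, hδ, fun k hk l hl hkl x y hx hy => ?_⟩
  have h1 := h (k, l) (by simp [hk, hl, hkl])
  have hx' : dist (a k) (a k + r k • x) ≤ r k := by
    rw [dist_self_add_right, norm_smul, Real.norm_of_nonneg (hr _).le]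
    exact mul_le_of_le_one_right (hr k).le hx
  have hy' : dist (a l + r l • y) (a l) ≤ r l := by
    rw [dist_self_add_left, norm_smul, Real.norm_of_nonneg (hr _).le]
    exact mul_le_of_le_one_right (hr l).le hy
  have := dist_triangle4 (a k) (a k + r k • x) (a l + r l • y) (a l)
  simp only at h1
  linarith

/-- If `∑ r_k ^ s > 1` over finitely many indices, coding `[0, 1)` by intervals of lengths
`r_k ^ s` sends it injectively into the limit set, with an `s`-Hölder inverse. -/
lemma le_dimH_of_lt_sum (hr : ∀ k, 0 < r k) (hρ : ∀ k, r k ≤ ρ) (hρ1 : ρ < 1)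
    (hb : ∀ k, ‖a k‖ + r k ≤ 1) (hsep : ∀ k l, k ≠ l → r k + r l < dist (a k) (a l))
    {s : ℝ} (hs : 0 < s) (N : ℕ) (hN : 1 < ∑ k ∈ Finset.range N, r k ^ s) :
    ENNReal.ofReal s ≤ dimH (simLimitSet a r) := by
  obtain ⟨π, hJ, hπ1, hπ⟩ := exists_coding hr hρ hρ1 hb
  obtain ⟨d, T, q, hT⟩ := exists_expanding_map (fun k => r k ^ s)
    (fun k => Real.rpow_pos_of_pos (hr k) s) N hN
  obtain ⟨δ, hδ, hdist⟩ := exists_separation hr hsep N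
  have hρ0 : 0 ≤ ρ := (hr 0).le.trans (hρ 0)
  set g : ℝ → EuclideanSpace ℝ (Fin n) := fun t => π fun m => d (T^[m] t) with hg_def
  have hg : ∀ t, g t = a (d t) + r (d t) • g (T t) := fun t => by
    rw [hg_def]
    exact hπ _
  have hgn : ∀ t, ‖g t‖ ≤ 1 := fun t => hπ1 _
  have hC : 0 ≤ (δ ^ s)⁻¹ := inv_nonneg.2 (Real.rpow_nonneg hδ.le s)
  -- The error term decreases with the number of common digits that are peeled off.
  have happrox : ∀ m : ℕ, ∀ t ∈ Ico (0 : ℝ) 1, ∀ t' ∈ Ico (0 : ℝ) 1,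
      |t - t'| ≤ (δ ^ s)⁻¹ * dist (g t) (g t') ^ s + (ρ ^ s) ^ m := by
    intro m
    induction m with
    | zero =>
      intro t ht t' ht'
      have : 0 ≤ (δ ^ s)⁻¹ * dist (g t) (g t') ^ s := by positivity
      have : |t - t'| ≤ 1 := abs_le.2 ⟨by linarith [ht.1, ht'.2], by linarith [ht'.1, ht.2]⟩
      rw [pow_zero]
      linarith
    | succ m ih =>
      intro t ht t' ht'
      obtain ⟨h1, h2, h3⟩ := hT t ht
      obtain ⟨h1', h2', h3'⟩ := hT t' ht'
      by_cases hdd : d t = d t'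
      · have hrs : 0 < r (d t') ^ s := Real.rpow_pos_of_pos (hr _) s
        have e1 : |t - t'| = r (d t') ^ s * |T t - T t'| := by
          rw [hdd] at h3
          rw [← abs_of_pos hrs, ← abs_mul]
          congr 1
          linear_combination h3 - h3'
        have e2 : dist (g t) (g t') ^ s = r (d t') ^ s * dist (g (T t)) (g (T t')) ^ s := by
          rw [hg t, hg t', hdd, dist_add_left, dist_smul₀, Real.norm_of_nonneg (hr _).le,
            Real.mul_rpow (hr _).le dist_nonneg]
        have e3 : r (d t') ^ s ≤ ρ ^ s := Real.rpow_le_rpow (hr _).le (hρ _) hs.le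
        have e4 : 0 ≤ (ρ ^ s) ^ m := by positivity
        rw [e1, e2, pow_succ']
        have := mul_le_mul_of_nonneg_left (ih _ h2 _ h2') hrs.le
        have := mul_le_mul_of_nonneg_right e3 e4
        linarith
      · have h4 : δ ≤ dist (g t) (g t') := by
          rw [hg t, hg t']
          exact hdist _ h1 _ h1' hdd _ _ (hgn _) (hgn _)
        have h5 : 1 ≤ (δ ^ s)⁻¹ * dist (g t) (g t') ^ s := by
          rw [← div_eq_inv_mul, one_le_div (Real.rpow_pos_of_pos hδ s)]
          exact Real.rpow_le_rpow hδ.le h4 hs.le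
        have : |t - t'| ≤ 1 := abs_le.2 ⟨by linarith [ht.1, ht'.2], by linarith [ht'.1, ht.2]⟩
        have : 0 ≤ (ρ ^ s) ^ (m + 1) := by positivity
        linarith
  have hholder := le_dimH_of_inverse_holder g hs hC fun t ht t' ht' => by
    have hlim := (tendsto_pow_atTop_nhds_zero_of_lt_one (Real.rpow_nonneg hρ0 s)
      (Real.rpow_lt_one hρ0 hρ1 hs)).const_add ((δ ^ s)⁻¹ * dist (g t) (g t') ^ s)
    rw [add_zero] at hlim
    exact ge_of_tendsto' hlim fun m => happrox m t ht t' ht'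
  refine hholder.trans (dimH_mono ?_)
  rw [hJ]
  rintro _ ⟨t, -, rfl⟩
  exact mem_range_self _

lemma le_dimH_of_hasSum (hr : ∀ k, 0 < r k) (hρ : ∀ k, r k ≤ ρ) (hρ1 : ρ < 1)
    (hb : ∀ k, ‖a k‖ + r k ≤ 1) (hsep : ∀ k l, k ≠ l → r k + r l < dist (a k) (a l))
    {h : ℝ} (hh : 0 < h) (hsum : HasSum (fun k => r k ^ h) 1) :
    ENNReal.ofReal h ≤ dimH (simLimitSet a r) := by
  have hlt1 : ∀ k, r k < 1 := fun k => (hρ k).trans_lt hρ1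
  have key : ∀ s, 0 < s → s < h → ENNReal.ofReal s ≤ dimH (simLimitSet a r) := by
    intro s hs hsh
    -- Lowering the exponent gains at least `r 0 ^ s - r 0 ^ h`, so a finite part has sum above 1.
    have hgain : r 0 ^ h < r 0 ^ s := Real.rpow_lt_rpow_of_exponent_gt (hr 0) (hlt1 0) hsh
    have hev : ∀ᶠ N in atTop, 1 - (r 0 ^ s - r 0 ^ h) < ∑ k ∈ Finset.range N, r k ^ h :=
      hsum.tendsto_sum_nat.eventually_const_lt (by linarith)
    obtain ⟨N, hN, hN1⟩ := (hev.and (eventually_ge_atTop 1)).exists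
    refine le_dimH_of_lt_sum hr hρ hρ1 hb hsep hs N ?_
    obtain ⟨M, rfl⟩ : ∃ M, N = M + 1 := ⟨N - 1, by omega⟩
    rw [Finset.sum_range_succ'] at hN ⊢
    have : ∑ k ∈ Finset.range M, r (k + 1) ^ h ≤ ∑ k ∈ Finset.range M, r (k + 1) ^ s :=
      Finset.sum_le_sum fun k _ =>
        Real.rpow_le_rpow_of_exponent_ge (hr _) (hlt1 _).le hsh.le
    linarith
  have hlim : Tendsto ENNReal.ofReal (nhdsWithin h (Iio h)) (nhds (ENNReal.ofReal h)) :=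
    (ENNReal.continuous_ofReal.tendsto h).mono_left nhdsWithin_le_nhds
  refine le_of_tendsto hlim ?_
  filter_upwards [Ioo_mem_nhdsLT hh] with s hs
  exact key s hs.1 hs.2

end Lower

/-! ### The family of disjoint balls -/

section Balls

variable {n : ℕ}

/-- Weights below a given sequence with a partial sum above `1` can be chosen with sum exactly `1`:
the tail is cut down to total mass at most `1 / 2`, and the finite part is rescaled. -/
lemma exists_weights (W : ℕ → ℝ) (hW : ∀ k, 0 < W k) (N : ℕ)
    (hN : 1 < ∑ k ∈ Finset.range N, W k) :
    ∃ w : ℕ → ℝ, (∀ k, 0 < w k) ∧ (∀ k, w k ≤ W k) ∧ HasSum w 1 := by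
  set S := ∑ k ∈ Finset.range N, W k with hS
  have hS0 : 0 < S := one_pos.trans hN
  set v : ℕ → ℝ := fun k => if k < N then 0 else min (W k) ((1 / 2) ^ k * (1 / 4)) with hv
  have hgeo : HasSum (fun k : ℕ => ((1 : ℝ) / 2) ^ k * (1 / 4)) (2 * (1 / 4)) :=
    hasSum_geometric_two.mul_right _
  have hv0 : ∀ k, 0 ≤ v k := fun k => by
    simp only [hv]
    split_ifs
    · exact le_rfl
    · exact le_min (hW k).le (by positivity)
  have hvle : ∀ k, v k ≤ (1 / 2) ^ k * (1 / 4) := fun k => by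
    simp only [hv]
    split_ifs
    · positivity
    · exact min_le_right _ _
  have hvs : Summable v := Summable.of_nonneg_of_le hv0 hvle hgeo.summable
  have hσ : ∑' k, v k ≤ 1 / 2 := by
    have := hvs.tsum_le_tsum hvle hgeo.summable
    rw [hgeo.tsum_eq] at this
    linarith
  have hσ0 : 0 ≤ ∑' k, v k := tsum_nonneg hv0
  set σ := ∑' k, v k
  have hl0 : 0 < (1 - σ) / S := div_pos (by linarith) hS0
  have hl1 : (1 - σ) / S ≤ 1 := (div_le_one hS0).2 (by linarith)
  have hu : HasSum (fun k => if k < N then (1 - σ) / S * W k else 0) (1 - σ) := by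
    have h1 : HasSum (fun k => if k < N then (1 - σ) / S * W k else 0)
        (∑ k ∈ Finset.range N, if k < N then (1 - σ) / S * W k else 0) :=
      hasSum_sum_of_ne_finset_zero fun k hk => by simpa using fun h => absurd h (by simpa using hk)
    convert h1 using 1
    rw [Finset.sum_congr rfl fun k hk => if_pos (Finset.mem_range.1 hk), ← Finset.mul_sum, ← hS]
    field_simp
  refine ⟨fun k => (if k < N then (1 - σ) / S * W k else 0) + v k, fun k => ?_, fun k => ?_, ?_⟩
  · simp only [hv]
    split_ifs
    · have := mul_pos hl0 (hW k)
      linarith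
    · have := lt_min (hW k) (by positivity : (0 : ℝ) < (1 / 2) ^ k * (1 / 4))
      linarith
  · simp only [hv]
    split_ifs
    · have := mul_le_mul_of_nonneg_right hl1 (hW k).le
      linarith
    · have := min_le_left (W k) ((1 / 2) ^ k * (1 / 4))
      linarith
  · have := hu.add hvs.hasSum
    rwa [sub_add_cancel] at this

/-- Vitali's covering lemma applied to the balls of radius `c ‖x‖ ^ 2` around `x ≠ 0`: a disjoint
sequence of them such that their fivefold enlargements cover a punctured ball around `0`. -/
lemma exists_vitali (hn : 1 ≤ n) {c : ℝ} (hc : 0 < c) (hc1 : c ≤ 1 / 24) :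
    ∃ a : ℕ → EuclideanSpace ℝ (Fin n), (∀ k, 0 < ‖a k‖) ∧ (∀ k, ‖a k‖ ≤ 1 / 2) ∧
      (∀ k l, k ≠ l → c * ‖a k‖ ^ 2 + c * ‖a l‖ ^ 2 < dist (a k) (a l)) ∧
      ∀ x : EuclideanSpace ℝ (Fin n), 0 < ‖x‖ → ‖x‖ ≤ 1 / 2 →
        ∃ k, dist x (a k) ≤ 5 * (c * ‖a k‖ ^ 2) ∧ ‖a k‖ ≤ 2 * ‖x‖ := by
  have : Nonempty (Fin n) := ⟨⟨0, hn⟩⟩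
  set t : Set (EuclideanSpace ℝ (Fin n)) := {x | 0 < ‖x‖ ∧ ‖x‖ ≤ 1 / 2} with ht
  obtain ⟨u, hut, hdisj, hcov⟩ := Vitali.exists_disjoint_subfamily_covering_enlargement_closedBall
    t id (fun x => c * ‖x‖ ^ 2) c (fun x hx => by
      have : ‖x‖ ^ 2 ≤ 1 := pow_le_one₀ hx.1.le (by linarith [hx.2])
      exact mul_le_of_le_one_right hc.le this) 5 (by norm_num)
  have hpos : ∀ x ∈ u, 0 < c * ‖x‖ ^ 2 := fun x hx =>
    mul_pos hc (pow_pos (hut hx).1 2)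
  have hcov' : ∀ x ∈ t, ∃ b ∈ u, dist x b ≤ 5 * (c * ‖b‖ ^ 2) ∧ ‖b‖ ≤ 2 * ‖x‖ := by
    intro x hx
    obtain ⟨b, hb, hsub⟩ := hcov x hx
    have h1 : dist x b ≤ 5 * (c * ‖b‖ ^ 2) := by
      have : x ∈ closedBall (id x) (c * ‖x‖ ^ 2) := mem_closedBall_self (by positivity)
      exact hsub this
    refine ⟨b, hb, h1, ?_⟩
    obtain ⟨hb0, hb1⟩ := hut hb
    have h2 : ‖b‖ - ‖x‖ ≤ dist x b := by
      rw [dist_eq_norm, norm_sub_rev]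
      exact norm_sub_norm_le _ _
    have h3 : c * ‖b‖ ≤ 1 / 24 * (1 / 2) := by gcongr
    nlinarith
  have hcount : u.Countable := by
    refine hdisj.countable_of_nonempty_interior fun x hx => ?_
    exact (nonempty_ball.2 (hpos x hx)).mono ball_subset_interior_closedBall
  have hex : ∀ ε : ℝ, 0 < ε → ε ≤ 1 / 2 → ∃ x ∈ t, ‖x‖ = ε := fun ε h0 h1 => by
    obtain ⟨x, hx⟩ := exists_norm_eq (EuclideanSpace ℝ (Fin n)) h0.le
    exact ⟨x, ⟨by rwa [hx], by rwa [hx]⟩, hx⟩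
  have hinf : u.Infinite := by
    intro hfin
    obtain ⟨x₀, hx₀, -⟩ := hex (1 / 2) (by norm_num) le_rfl
    obtain ⟨b₀, hb₀, -⟩ := hcov' x₀ hx₀
    obtain ⟨b, hb, hmin⟩ := hfin.exists_minimalFor (fun b => ‖b‖) u ⟨b₀, hb₀⟩
    obtain ⟨hb0, hb1⟩ := hut hb
    obtain ⟨x, hx, hxn⟩ := hex (‖b‖ / 4) (by linarith) (by linarith)
    obtain ⟨b', hb', -, h2⟩ := hcov' x hx
    rcases le_total ‖b‖ ‖b'‖ with h | h
    · rw [hxn] at h2; linarith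
    · have := hmin hb' h
      rw [hxn] at h2
      simp only at this
      linarith
  have := hcount.to_subtype
  have := hinf.to_subtype
  obtain ⟨e⟩ := nonempty_equiv_of_countable (α := ℕ) (β := u)
  refine ⟨fun k => e k, fun k => (hut (e k).2).1, fun k => (hut (e k).2).2, fun k l hkl => ?_,
    fun x h0 h1 => ?_⟩
  · have hne : (e k : EuclideanSpace ℝ (Fin n)) ≠ e l := fun h => hkl (e.injective (Subtype.ext h))
    exact (disjoint_closedBall_closedBall_iff (hpos _ (e k).2).le (hpos _ (e l).2).le).1
      (hdisj (e k).2 (e l).2 hne)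
  · obtain ⟨b, hb, h⟩ := hcov' x ⟨h0, h1⟩
    refine ⟨e.symm ⟨b, hb⟩, ?_⟩
    simpa using h

/-- Comparing volumes in the covering gives `∑ R_k ^ n ≥ 10⁻ⁿ` for `R_k = c ‖a k‖ ^ 2`, whatever
`c` is. As `R_k ≤ c`, the sum of `R_k ^ h` is at least `10⁻ⁿ c ^ (h - n)`. -/
lemma exists_one_lt_sum {c : ℝ} (hc : 0 < c) {h : ℝ} (hhn : h < n)
    (hcn : c ^ ((n : ℝ) - h) < (1 / 10) ^ n)
    {a : ℕ → EuclideanSpace ℝ (Fin n)} (ha0 : ∀ k, 0 < ‖a k‖) (ha1 : ∀ k, ‖a k‖ ≤ 1 / 2)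
    (hcov : ∀ x : EuclideanSpace ℝ (Fin n), 0 < ‖x‖ → ‖x‖ ≤ 1 / 2 →
        ∃ k, dist x (a k) ≤ 5 * (c * ‖a k‖ ^ 2)) (hn : 1 ≤ n) :
    ∃ N, 1 < ∑ k ∈ Finset.range N, (c * ‖a k‖ ^ 2) ^ h := by
  by_contra! hcon
  have : Nonempty (Fin n) := ⟨⟨0, hn⟩⟩
  set R : ℕ → ℝ := fun k => c * ‖a k‖ ^ 2 with hR
  have hR0 : ∀ k, 0 < R k := fun k => mul_pos hc (pow_pos (ha0 k) 2)
  have hRc : ∀ k, R k ≤ c := fun k =>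
    mul_le_of_le_one_right hc.le (pow_le_one₀ (ha0 k).le (by linarith [ha1 k]))
  set μ : MeasureTheory.Measure (EuclideanSpace ℝ (Fin n)) := MeasureTheory.volume
  set V := μ (ball 0 1)
  have hV0 : V ≠ 0 := (measure_ball_pos μ _ one_pos).ne'
  have hVt : V ≠ ⊤ := MeasureTheory.measure_ball_lt_top.ne
  have hsub : closedBall (0 : EuclideanSpace ℝ (Fin n)) (1 / 2) ⊆
      {0} ∪ ⋃ k, closedBall (a k) (5 * R k) := by
    intro x hx
    by_cases hx0 : x = 0
    · exact Or.inl hx0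
    · obtain ⟨k, hk⟩ := hcov x (norm_pos_iff.2 hx0) (by simpa using hx)
      exact Or.inr (mem_iUnion.2 ⟨k, hk⟩)
  have hvol : ENNReal.ofReal ((1 / 2) ^ n) * V ≤ (∑' k, ENNReal.ofReal ((5 * R k) ^ n)) * V := by
    have h1 := (MeasureTheory.measure_mono (μ := μ) hsub).trans (MeasureTheory.measure_union_le _ _)
    rw [MeasureTheory.measure_singleton, zero_add] at h1
    have h2 := h1.trans (MeasureTheory.measure_iUnion_le _)
    rw [MeasureTheory.Measure.addHaar_closedBall μ _ (by norm_num)] at h2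
    simp_rw [fun k => MeasureTheory.Measure.addHaar_closedBall μ (a k)
      (by have := hR0 k; positivity : 0 ≤ 5 * R k)] at h2
    rwa [finrank_euclideanSpace_fin, ENNReal.tsum_mul_right] at h2
  have hvol' := (ENNReal.mul_le_mul_iff_left hV0 hVt).1 hvol
  have hterm : ∀ k, ENNReal.ofReal ((5 * R k) ^ n) ≤
      ENNReal.ofReal (5 ^ n * c ^ ((n : ℝ) - h)) * ENNReal.ofReal (R k ^ h) := fun k => by
    rw [← ENNReal.ofReal_mul (by positivity)]
    refine ENNReal.ofReal_le_ofReal ?_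
    have e1 : R k ^ n = R k ^ ((n : ℝ) - h) * R k ^ h := by
      rw [← Real.rpow_add (hR0 k), sub_add_cancel, Real.rpow_natCast]
    have e2 : R k ^ ((n : ℝ) - h) ≤ c ^ ((n : ℝ) - h) :=
      Real.rpow_le_rpow (hR0 k).le (hRc k) (by linarith)
    have e3 : 0 ≤ R k ^ h := Real.rpow_nonneg (hR0 k).le _
    rw [mul_pow, e1, mul_assoc]
    gcongr
  have hle : ∑' k, ENNReal.ofReal (R k ^ h) ≤ 1 := by
    refine ENNReal.tsum_le_of_sum_range_le fun N => ?_
    rw [← ENNReal.ofReal_sum_of_nonneg fun k _ => Real.rpow_nonneg (hR0 k).le _]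
    exact ENNReal.ofReal_le_one.2 (hcon N)
  have hfin : ENNReal.ofReal ((1 / 2) ^ n) ≤ ENNReal.ofReal (5 ^ n * c ^ ((n : ℝ) - h)) := by
    refine hvol'.trans ((ENNReal.tsum_le_tsum hterm).trans ?_)
    rw [ENNReal.tsum_mul_left]
    exact mul_le_of_le_one_right' hle
  rw [ENNReal.ofReal_le_ofReal_iff (by positivity)] at hfin
  have h5 : (5 : ℝ) ^ n * c ^ ((n : ℝ) - h) < 5 ^ n * (1 / 10) ^ n := by gcongr
  rw [← mul_pow] at h5
  norm_num at h5 hfin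
  linarith

/-! ### Failure of porosity at the origin -/

/-- If every point `x ≠ 0` near `0` is within `‖x‖ ^ 2` of `A`, then `A` is not porous at `0`:
a ball contained in `B(0, r) \ A` has radius at most `r ^ 2`. -/
lemma not_porousAt_zero (hn : 1 ≤ n) {A : Set (EuclideanSpace ℝ (Fin n))}
    (hA : ∀ x : EuclideanSpace ℝ (Fin n), 0 < ‖x‖ → ‖x‖ ≤ 1 / 2 → ∃ y ∈ A, dist y x ≤ ‖x‖ ^ 2) :
    0 ∈ closure A ∧ ¬ PorousAt A 0 := by
  have : Nonempty (Fin n) := ⟨⟨0, hn⟩⟩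
  have hcl : (0 : EuclideanSpace ℝ (Fin n)) ∈ closure A := by
    refine Metric.mem_closure_iff.2 fun ε hε => ?_
    have hδ : 0 < min (ε / 4) (1 / 2) := lt_min (by linarith) (by norm_num)
    obtain ⟨x, hx⟩ := exists_norm_eq (EuclideanSpace ℝ (Fin n)) hδ.le
    obtain ⟨y, hy, hyx⟩ := hA x (hx ▸ hδ) (hx ▸ min_le_right _ _)
    refine ⟨y, hy, ?_⟩
    have h1 := dist_triangle 0 x y
    rw [dist_zero_left, dist_zero_left, dist_comm x y] at h1
    rw [dist_zero_left]
    have h2 : ‖x‖ ≤ ε / 4 := hx ▸ min_le_left _ _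
    have h3 : ‖x‖ ≤ 1 / 2 := hx ▸ min_le_right _ _
    nlinarith [norm_nonneg x]
  refine ⟨hcl, ?_⟩
  rintro ⟨c, hc, r₀, hr₀, hpor⟩
  obtain ⟨r, hr0, hr⟩ := exists_between (lt_min hr₀ (lt_min hc.1 (by norm_num : (0 : ℝ) < 1 / 2)))
  obtain ⟨hr1, hr23⟩ := lt_min_iff.1 hr
  obtain ⟨hr2, hr3⟩ := lt_min_iff.1 hr23
  have hle : por A 0 r ≤ r := by
    refine Real.sSup_le ?_ hr0.le
    rintro b ⟨hb, y, hy⟩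
    rcases hb.eq_or_lt with rfl | hb
    · exact hr0.le
    have hbr : 0 < b * r := mul_pos hb hr0
    have hyr : ‖y‖ < r := by simpa using (hy (mem_ball_self hbr)).1
    by_contra! hlt
    by_cases hy0 : y = 0
    · subst hy0
      obtain ⟨z, hz, hzd⟩ := Metric.mem_closure_iff.1 hcl (b * r) hbr
      exact (hy (mem_ball'.2 hzd)).2 hz
    · obtain ⟨z, hz, hzd⟩ := hA y (norm_pos_iff.2 hy0) (by linarith)
      refine (hy (mem_ball.2 (hzd.trans_lt ?_))).2 hz
      nlinarith [norm_nonneg y]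
  linarith [hpor r ⟨hr0, hr1⟩]

end Balls

/-! ### Assembly -/

/-- For every `n ≥ 1` and every `h ∈ (0,n)` there is a countable system
of contracting rotation-free similarities of the closed unit ball of `ℝⁿ` with pairwise
disjoint images (Strong Separation Condition) whose limit set has Hausdorff dimension `h`
and is not porous at some point of its closure. -/
theorem stmt9 (n : ℕ) (hn : 1 ≤ n) (h : ℝ) (hh : 0 < h) (hhn : h < n) :
    ∃ (a : ℕ → EuclideanSpace ℝ (Fin n)) (r : ℕ → ℝ),
      (∀ k, r k ∈ Set.Ioo (0 : ℝ) 1) ∧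
      (∀ k, (fun y => a k + r k • y) '' Metric.closedBall 0 1 ⊆ Metric.closedBall 0 1) ∧
      (∀ k l : ℕ, k ≠ l →
        Disjoint ((fun y => a k + r k • y) '' Metric.closedBall 0 1)
          ((fun y => a l + r l • y) '' Metric.closedBall 0 1)) ∧
      dimH (simLimitSet a r) = ENNReal.ofReal h ∧
      ∃ ξ ∈ closure (simLimitSet a r), ¬ PorousAt (simLimitSet a r) ξ := by
  have hnh : 0 < (n : ℝ) - h := by linarith
  obtain ⟨c, hc, hc1, hcn⟩ : ∃ c : ℝ, 0 < c ∧ c ≤ 1 / 24 ∧ c ^ ((n : ℝ) - h) < (1 / 10) ^ n := by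
    have hlim : Tendsto (fun c : ℝ => c ^ ((n : ℝ) - h)) (nhdsWithin 0 (Ioi 0)) (nhds 0) := by
      have := (Real.continuousAt_rpow_const 0 _ (Or.inr hnh.le)).tendsto
      rw [Real.zero_rpow hnh.ne'] at this
      exact this.mono_left nhdsWithin_le_nhds
    obtain ⟨c, h1, h2⟩ := ((hlim.eventually_lt_const
      (by positivity : (0 : ℝ) < (1 / 10) ^ n)).and
      (Ioc_mem_nhdsGT (by norm_num : (0 : ℝ) < 1 / 24))).exists
    exact ⟨c, h2.1, h2.2, h1⟩
  obtain ⟨a, ha0, ha1, hdisj, hcov⟩ := exists_vitali hn hc hc1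
  obtain ⟨N, hN⟩ := exists_one_lt_sum hc hhn hcn ha0 ha1
    (fun x h0 h1 => (hcov x h0 h1).imp fun _ => And.left) hn
  have hR0 : ∀ k, 0 < c * ‖a k‖ ^ 2 := fun k => mul_pos hc (pow_pos (ha0 k) 2)
  obtain ⟨w, hw0, hwW, hw⟩ := exists_weights (fun k => (c * ‖a k‖ ^ 2) ^ h)
    (fun k => Real.rpow_pos_of_pos (hR0 k) h) N hN
  set r : ℕ → ℝ := fun k => w k ^ h⁻¹ with hr_def
  have hr0 : ∀ k, 0 < r k := fun k => Real.rpow_pos_of_pos (hw0 k) _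
  have hrh : ∀ k, r k ^ h = w k := fun k => Real.rpow_inv_rpow (hw0 k).le hh.ne'
  have hrR : ∀ k, r k ≤ c * ‖a k‖ ^ 2 := fun k => by
    rw [← Real.rpow_le_rpow_iff (hr0 k).le (hR0 k).le hh, hrh]
    exact hwW k
  have hρ : ∀ k, r k ≤ 1 / 24 := fun k =>
    (hrR k).trans ((mul_le_of_le_one_right hc.le
      (pow_le_one₀ (ha0 k).le (by linarith [ha1 k]))).trans hc1)
  have hb : ∀ k, ‖a k‖ + r k ≤ 1 := fun k => by linarith [hρ k, ha1 k]
  have hsep : ∀ k l, k ≠ l → r k + r l < dist (a k) (a l) := fun k l hkl => by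
    linarith [hdisj k l hkl, hrR k, hrR l]
  have hsum : HasSum (fun k => r k ^ h) 1 := by simpa only [hrh] using hw
  have hρ1 : (1 : ℝ) / 24 < 1 := by norm_num
  have himg : ∀ k, (fun y => a k + r k • y) '' closedBall 0 1 ⊆ closedBall (a k) (r k) := by
    rintro k _ ⟨y, hy, rfl⟩
    rw [mem_closedBall, dist_self_add_left, norm_smul, Real.norm_of_nonneg (hr0 k).le]
    exact mul_le_of_le_one_right (hr0 k).le (by simpa using hy)
  refine ⟨a, r, fun k => ⟨hr0 k, by linarith [hρ k]⟩, fun k => ?_, fun k l hkl => ?_, ?_, 0, ?_⟩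
  · refine (himg k).trans (closedBall_subset_closedBall' ?_)
    rw [dist_zero_right, add_comm]
    exact hb k
  · exact (closedBall_disjoint_closedBall (hsep k l hkl)).mono (himg k) (himg l)
  · exact le_antisymm (dimH_le_of_hasSum hr0 hρ hρ1 hb hh hsum)
      (le_dimH_of_hasSum hr0 hρ hρ1 hb hsep hh hsum)
  · refine not_porousAt_zero hn fun x h0 h1 => ?_
    obtain ⟨k, hk1, hk2⟩ := hcov x h0 h1
    obtain ⟨y, hy, hyk⟩ := exists_mem_simLimitSet_near hr0 hρ hρ1 hb k
    refine ⟨y, hy, ?_⟩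
    -- `dist y x ≤ 6 c ‖a k‖ ^ 2 ≤ 24 c ‖x‖ ^ 2`, which is where `c ≤ 1 / 24` is needed.
    have h2 := dist_triangle_right y x (a k)
    have h3 : ‖a k‖ ^ 2 ≤ (2 * ‖x‖) ^ 2 := by gcongr
    have h4 : c * ‖a k‖ ^ 2 ≤ 1 / 24 * (2 * ‖x‖) ^ 2 := by gcongr
    nlinarith [hrR k]
end

section
/- Let F ⊆ E be a finite set with at least two elements. Then the limit set J_F of the complex continued fraction system with alphabet F is v-directed porous for every unit vector v ∈ S¹ (identifying ℂ with ℝ²). -/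
/-!
The limit set `J` of a finite alphabet is *uniformly disconnected*, and a uniformly disconnected
set is directed porous in every direction.

Every point of `J` is `φ_e w` with `e ∈ F`, `w ∈ J`; finiteness of `F` bounds `|e + w|` by some `B`,
and this keeps `J` at distance at least `η²`, `η = B⁻²`, from the boundary of `X`. Translates of
`X` by distinct Gaussian integers have disjoint interiors, so the first-level pieces `φ_e(J)` are
pairwise at distance at least `2 η² / B²` (`cf_gap`).

A composition `g = φ_{ω₀} ∘ ⋯ ∘ φ_{ω_{n-1}}` is Möbius with denominator `q (1 + u z)`, `u ∈ X`, and
determinant `±1`, so `|g z - g w| = |z - w| / (|q|² |1 + u z| |1 + u w|)`; since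
`3/4 ≤ |1 + u z| ≤ 2` on `X`, distances are scaled by `|q|⁻²` up to bounded factors. Consequently a
piece `g(J)` has diameter at most `2 |q|⁻²`, and all points of `J` outside it are at distance at
least a constant times `|q|⁻²` from it (`CFPiece`). One more letter multiplies `|q|` by a factor
in `[1 + η, B]`, so around each point there are pieces of every scale (`cf_exists_piece`).

Given `x ∈ J` and `r`, take such a piece `P ∋ x` of diameter at most `r/4` whose distance to the
rest of `J` is at least `2 c r`. Along the segment from `x` to `x + (r/2) v` the distance to `P`
varies continuously from `0` to at least `r/4`, so it equals `c r` at some point; the ball of radius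
`c r` there misses `J`.
-/

open Metric Set Filter

/-- Directed porosity of `A` at `x` at scale `r` in direction `v`: the supremum of all
`c ≥ 0` such that some open ball of radius `c·r` centered on the line `x + ℝ·v` is
contained in `B(x,r) ∖ A`. -/
noncomputable def porDir {V : Type*} [NormedAddCommGroup V] [NormedSpace ℝ V]
    (v : V) (A : Set V) (x : V) (r : ℝ) : ℝ :=
  sSup {c : ℝ | 0 ≤ c ∧ ∃ t : ℝ,
    Metric.ball (x + t • v) (c * r) ⊆ Metric.ball x r \ A}

/-- `A` is `v`-directed porous. -/
def DirectedPorous {V : Type*} [NormedAddCommGroup V] [NormedSpace ℝ V]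
    (v : V) (A : Set V) : Prop :=
  ∃ c ∈ Set.Ioo (0 : ℝ) 1, ∃ r₀ > (0 : ℝ), ∀ x ∈ A, ∀ r ∈ Set.Ioo (0 : ℝ) r₀,
    c ≤ porDir v A x r

/-- The Gaussian integers with positive real part, as a subset of `ℂ`. -/
def Egauss : Set ℂ :=
  {w | ∃ m n : ℤ, 1 ≤ m ∧ w = (m : ℂ) + (n : ℂ) * Complex.I}

/-- The composition `φ_{ω₀} ∘ ⋯ ∘ φ_{ω_{m-1}}` of the continued fraction maps
`φ_e z = 1/(e+z)`. -/
noncomputable def cfComp (ω : ℕ → ℂ) (m : ℕ) : ℂ → ℂ :=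
  (List.ofFn fun i : Fin m => ω i).foldr (fun e g => (fun z => (e + z)⁻¹) ∘ g) id

/-- The limit set of the complex continued fraction system with alphabet `I ⊆ ℂ`. -/
def cfLimitSet (I : Set ℂ) : Set ℂ :=
  {z | ∃ ω : ℕ → ℂ, (∀ k, ω k ∈ I) ∧
    Filter.Tendsto (fun m => cfComp ω m 0) Filter.atTop (nhds z)}

/-! ### The invariant disk and Gaussian integers -/

/-- The closed disk `|z - 1/2| ≤ 1/2`, written as `|z|² ≤ Re z`. -/
def cfDisk : Set ℂ := {z | Complex.normSq z ≤ z.re}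

lemma cfDisk_bounds {z : ℂ} (hz : z ∈ cfDisk) :
    0 ≤ z.re ∧ z.re ≤ 1 ∧ ‖z‖ ≤ 1 := by
  have h : z.re * z.re + z.im * z.im ≤ z.re := by simpa [cfDisk, Complex.normSq_apply] using hz
  have h1 : z.re ≤ 1 := by nlinarith [sq_nonneg z.im, sq_nonneg (z.re - 1)]
  refine ⟨by nlinarith [sq_nonneg z.im, sq_nonneg z.re], h1, ?_⟩
  have : ‖z‖ ^ 2 ≤ 1 := by
    rw [← Complex.normSq_eq_norm_sq, Complex.normSq_apply]; linarith
  nlinarith [norm_nonneg z]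

lemma cfDisk_distortion {u z : ℂ} (hu : u ∈ cfDisk) (hz : z ∈ cfDisk) :
    3 / 4 ≤ ‖1 + u * z‖ ∧ ‖1 + u * z‖ ≤ 2 := by
  obtain ⟨hu0, hu1, hun⟩ := cfDisk_bounds hu
  obtain ⟨hz0, hz1, hzn⟩ := cfDisk_bounds hz
  have h : z.re * z.re + z.im * z.im ≤ z.re := by simpa [cfDisk, Complex.normSq_apply] using hz
  have h' : u.re * u.re + u.im * u.im ≤ u.re := by simpa [cfDisk, Complex.normSq_apply] using hu
  constructor
  · refine le_trans ?_ (Complex.re_le_norm _)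
    simp only [Complex.add_re, Complex.one_re, Complex.mul_re]
    nlinarith [mul_nonneg hu0 hz0, sq_nonneg (u.im - z.im), sq_nonneg (u.re - 1 / 2),
      sq_nonneg (z.re - 1 / 2)]
  · calc ‖1 + u * z‖ ≤ ‖(1 : ℂ)‖ + ‖u * z‖ := norm_add_le _ _
      _ ≤ 2 := by
        rw [norm_one, norm_mul]
        nlinarith [norm_nonneg u, norm_nonneg z]

lemma one_le_re_of_Egauss {e : ℂ} (he : e ∈ Egauss) : 1 ≤ e.re := by
  obtain ⟨m, n, hm, rfl⟩ := he
  simpa using (by exact_mod_cast hm : (1 : ℝ) ≤ m)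

lemma one_le_norm_sub_of_Egauss {e e' : ℂ} (he : e ∈ Egauss) (he' : e' ∈ Egauss) (h : e ≠ e') :
    1 ≤ ‖e - e'‖ := by
  obtain ⟨m, n, -, rfl⟩ := he
  obtain ⟨m', n', -, rfl⟩ := he'
  by_cases hm : m = m'
  · have hn : n - n' ≠ 0 := by
      intro hn
      apply h
      rw [hm, sub_eq_zero.mp hn]
    refine le_trans ?_ (Complex.abs_im_le_norm _)
    have := Int.one_le_abs hn
    simpa using (by exact_mod_cast this : (1 : ℝ) ≤ |(n : ℝ) - n'|)
  · have hm' : m - m' ≠ 0 := sub_ne_zero.mpr hm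
    refine le_trans ?_ (Complex.abs_re_le_norm _)
    have := Int.one_le_abs hm'
    simpa using (by exact_mod_cast this : (1 : ℝ) ≤ |(m : ℝ) - m'|)

/-- Inversion of a point of the half-plane `Re w ≥ t`, for `t ≥ 0`, with `|w| ≤ B`. -/
lemma cf_inv_re {w : ℂ} {B t : ℝ} (hw : t ≤ w.re) (ht : 0 ≤ t) (hB : ‖w‖ ≤ B) (h0 : w ≠ 0) :
    t / B ^ 2 ≤ (w⁻¹).re := by
  have hp : 0 < ‖w‖ := norm_pos_iff.mpr h0
  have hw0 : 0 ≤ w.re := ht.trans hw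
  rw [Complex.inv_re, Complex.normSq_eq_norm_sq]
  gcongr

lemma cf_inv_mem {w : ℂ} (hw : 1 ≤ w.re) : w⁻¹ ∈ cfDisk := by
  have h0 : w ≠ 0 := by rintro rfl; norm_num at hw
  have hp : 0 < Complex.normSq w := Complex.normSq_pos.mpr h0
  change Complex.normSq w⁻¹ ≤ (w⁻¹).re
  rw [Complex.inv_re, map_inv₀, inv_eq_one_div]
  gcongr

/-! ### Self-similarity and separation of the limit set -/

lemma cfComp_succ (ω : ℕ → ℂ) (m : ℕ) (z : ℂ) :
    cfComp ω (m + 1) z = (ω 0 + cfComp (fun k => ω (k + 1)) m z)⁻¹ := by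
  simp [cfComp, List.ofFn_succ]

lemma cfComp_mem {F : Set ℂ} (hFE : F ⊆ Egauss) (m : ℕ) :
    ∀ ω : ℕ → ℂ, (∀ k, ω k ∈ F) → cfComp ω m 0 ∈ cfDisk := by
  induction m with
  | zero => intro ω _; simp [cfComp, cfDisk]
  | succ m ih =>
    intro ω hω
    rw [cfComp_succ]
    apply cf_inv_mem
    have h1 := one_le_re_of_Egauss (hFE (hω 0))
    have h2 := (cfDisk_bounds (ih (fun k => ω (k + 1)) fun k => hω _)).1
    rw [Complex.add_re]; linarith

lemma isClosed_cfDisk : IsClosed cfDisk :=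
  isClosed_le Complex.continuous_normSq Complex.continuous_re

lemma cfLimitSet_subset {F : Set ℂ} (hFE : F ⊆ Egauss) : cfLimitSet F ⊆ cfDisk := by
  rintro z ⟨ω, hω, hz⟩
  exact isClosed_cfDisk.mem_of_tendsto hz (Eventually.of_forall fun m => cfComp_mem hFE m ω hω)

section
variable {F : Set ℂ} {B : ℝ}

lemma cf_add_bounds (hFE : F ⊆ Egauss) (hB : ∀ e ∈ F, ‖e‖ + 1 ≤ B) {e z : ℂ} (he : e ∈ F)
    (hz : z ∈ cfDisk) : 1 + z.re ≤ (e + z).re ∧ ‖e + z‖ ≤ B ∧ e + z ≠ 0 := by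
  have h1 := one_le_re_of_Egauss (hFE he)
  obtain ⟨h2, -, h3⟩ := cfDisk_bounds hz
  have h4 : 1 + z.re ≤ (e + z).re := by rw [Complex.add_re]; linarith
  refine ⟨h4, ?_, ?_⟩
  · linarith [norm_add_le e z, hB e he]
  · intro h
    rw [h, Complex.zero_re] at h4
    linarith

/-- The limit set is covered by its first-level pieces. The limit of the shifted expansion exists
because the approximants stay away from `0`. -/
lemma cfLimitSet_cover (hFE : F ⊆ Egauss) (hB : ∀ e ∈ F, ‖e‖ + 1 ≤ B) (hB1 : 1 ≤ B) {z : ℂ}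
    (hz : z ∈ cfLimitSet F) : ∃ e ∈ F, ∃ w ∈ cfLimitSet F, z = (e + w)⁻¹ := by
  obtain ⟨ω, hω, hlim⟩ := hz
  have hlim' := (tendsto_add_atTop_iff_nat 1).mpr hlim
  have hz0 : z ≠ 0 := by
    have h : B⁻¹ ≤ ‖z‖ := by
      refine ge_of_tendsto hlim'.norm (Eventually.of_forall fun m => ?_)
      obtain ⟨-, h2, h3⟩ := cf_add_bounds hFE hB (hω 0)
        (cfComp_mem hFE m (fun k => ω (k + 1)) fun k => hω _)
      simp only [cfComp_succ]
      rw [norm_inv]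
      have := norm_pos_iff.mpr h3
      gcongr
    intro h0
    rw [h0, norm_zero] at h
    have : 0 < B⁻¹ := by positivity
    linarith
  refine ⟨ω 0, hω 0, z⁻¹ - ω 0, ⟨fun k => ω (k + 1), fun k => hω _, ?_⟩, by simp⟩
  have := (hlim'.inv₀ hz0).sub_const (ω 0)
  refine this.congr fun m => ?_
  simp [cfComp_succ]

lemma cfLimitSet_inv_mem (hFE : F ⊆ Egauss) (hB : ∀ e ∈ F, ‖e‖ + 1 ≤ B) {e z : ℂ}
    (he : e ∈ F) (hz : z ∈ cfLimitSet F) : (e + z)⁻¹ ∈ cfLimitSet F := by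
  have h0 := (cf_add_bounds hFE hB he (cfLimitSet_subset hFE hz)).2.2
  obtain ⟨ω, hω, hlim⟩ := hz
  refine ⟨fun k => Nat.casesOn k e ω, fun k => ?_, ?_⟩
  · cases k with
    | zero => exact he
    | succ k => exact hω k
  · refine (tendsto_add_atTop_iff_nat 1).mp (((hlim.const_add e).inv₀ h0).congr fun m => ?_)
    rw [cfComp_succ]
    rfl

lemma cfLimitSet_re (hFE : F ⊆ Egauss) (hB : ∀ e ∈ F, ‖e‖ + 1 ≤ B) (hB1 : 1 ≤ B) {z : ℂ}
    (hz : z ∈ cfLimitSet F) : 1 / B ^ 2 ≤ z.re := by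
  obtain ⟨e, he, w, hw, rfl⟩ := cfLimitSet_cover hFE hB hB1 hz
  have hw' := cfLimitSet_subset hFE hw
  obtain ⟨h1, h2, h3⟩ := cf_add_bounds hFE hB he hw'
  exact cf_inv_re (by linarith [(cfDisk_bounds hw').1]) zero_le_one h2 h3

/-- The limit set is at positive distance from the boundary of the disk. -/
lemma cfLimitSet_interior (hFE : F ⊆ Egauss) (hB : ∀ e ∈ F, ‖e‖ + 1 ≤ B) (hB1 : 1 ≤ B) {z : ℂ}
    (hz : z ∈ cfLimitSet F) : ‖z - 1 / 2‖ ≤ 1 / 2 - (1 / B ^ 2) ^ 2 := by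
  obtain ⟨e, he, w, hw, hzw⟩ := cfLimitSet_cover hFE hB hB1 hz
  have hη := cfLimitSet_re hFE hB hB1 hw
  have hw' := cfLimitSet_subset hFE hw
  obtain ⟨h1, h2, h3⟩ := cf_add_bounds hFE hB he hw'
  set s := e + w
  set η := 1 / B ^ 2 with hηdef
  have hBp : 0 < B := by linarith
  have hη0 : 0 ≤ η := by positivity
  have hη1 : η ≤ 1 := by
    rw [hηdef, div_le_iff₀ (by positivity)]; nlinarith
  have hsp : 0 < Complex.normSq s := Complex.normSq_pos.mpr h3
  have hns : Complex.normSq z = 1 / Complex.normSq s := by rw [hzw, map_inv₀, inv_eq_one_div]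
  have hre : z.re = s.re / Complex.normSq s := by rw [hzw, Complex.inv_re]
  have hlow : η ≤ Complex.normSq z := by
    rw [hns, Complex.normSq_eq_norm_sq, hηdef]
    have := norm_pos_iff.mpr h3
    gcongr
  have hkey : (1 + η) * Complex.normSq z ≤ z.re := by
    rw [hns, hre, mul_one_div]
    gcongr
    linarith
  have hsq : ‖z - 1 / 2‖ ^ 2 ≤ 1 / 4 - η ^ 2 := by
    rw [← Complex.normSq_eq_norm_sq]
    have : Complex.normSq (z - 1 / 2) = Complex.normSq z - z.re + 1 / 4 := by
      simp [Complex.normSq_apply]; ring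
    rw [this]
    nlinarith
  have hη2 : η ^ 2 ≤ 1 / 2 := by nlinarith [sq_nonneg ‖z - 1 / 2‖]
  refine abs_le_of_sq_le_sq' ?_ (by linarith) |>.2
  nlinarith [sq_nonneg (η ^ 2)]

/-- Strong separation of the first-level pieces. -/
lemma cf_gap (hFE : F ⊆ Egauss) (hB : ∀ e ∈ F, ‖e‖ + 1 ≤ B) (hB1 : 1 ≤ B) {e e' y p : ℂ}
    (he : e ∈ F) (he' : e' ∈ F) (hne : e' ≠ e) (hy : y ∈ cfLimitSet F) (hp : p ∈ cfLimitSet F) :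
    2 * (1 / B ^ 2) ^ 2 / B ^ 2 ≤ ‖(e' + y)⁻¹ - (e + p)⁻¹‖ := by
  obtain ⟨-, h2, h3⟩ := cf_add_bounds hFE hB he (cfLimitSet_subset hFE hp)
  obtain ⟨-, h2', h3'⟩ := cf_add_bounds hFE hB he' (cfLimitSet_subset hFE hy)
  have hsub : (e' + y)⁻¹ - (e + p)⁻¹ = ((e + p) - (e' + y)) / ((e' + y) * (e + p)) := by
    field_simp
  have h4 := cfLimitSet_interior hFE hB hB1 hy
  have h5 := cfLimitSet_interior hFE hB hB1 hp
  have h6 := one_le_norm_sub_of_Egauss (hFE he) (hFE he') hne.symm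
  have h7 : ‖e - e'‖ ≤ ‖(e + p) - (e' + y)‖ + ‖y - 1 / 2‖ + ‖p - 1 / 2‖ := by
    have : e - e' = ((e + p) - (e' + y)) + (y - 1 / 2) - (p - 1 / 2) := by ring
    rw [this]
    exact (norm_sub_le _ _).trans (by gcongr; exact norm_add_le _ _)
  have hp1 := norm_pos_iff.mpr h3
  have hp2 := norm_pos_iff.mpr h3'
  rw [hsub, norm_div, norm_mul]
  have h8 : ‖e' + y‖ * ‖e + p‖ ≤ B ^ 2 := by rw [sq]; gcongr
  have h9 : 2 * (1 / B ^ 2) ^ 2 ≤ ‖(e + p) - (e' + y)‖ := by linarith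
  gcongr

/-! ### Pieces of all scales -/

/-- The data attached to a composition `g` of the maps `φ_e` with `x ∈ g(J)`: its denominator is
`q (1 + u z)`, with `u` in the disk, and points of `J` outside `g(J)` are at distance at
least `δ / |q|²` from `g(J)`. -/
structure CFPiece (J : Set ℂ) (δ : ℝ) (x : ℂ) (g : ℂ → ℂ) (q u : ℂ) : Prop where
  dist_eq : ∀ z ∈ cfDisk, ∀ w ∈ cfDisk,
    ‖g z - g w‖ * (‖q‖ ^ 2 * (‖1 + u * z‖ * ‖1 + u * w‖)) = ‖z - w‖
  u_mem : u ∈ cfDisk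
  one_le : 1 ≤ ‖q‖
  mem : x ∈ g '' J
  gap : ∀ y ∈ J, y ∈ g '' J ∨ ∀ p ∈ J, δ / ‖q‖ ^ 2 ≤ ‖y - g p‖

lemma cfPiece_id {x : ℂ} {δ : ℝ} {J : Set ℂ} (hx : x ∈ J) : CFPiece J δ x id 1 0 where
  dist_eq := by simp
  u_mem := by simp [cfDisk]
  one_le := by simp
  mem := by simpa using hx
  gap := fun y hy => Or.inl (by simpa using hy)

/-- Passing from a piece around `x` to the next smaller one. -/
lemma cfPiece_step (hFE : F ⊆ Egauss) (hB : ∀ e ∈ F, ‖e‖ + 1 ≤ B) (hB1 : 1 ≤ B) {x : ℂ}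
    {g : ℂ → ℂ} {q u : ℂ}
    (h : CFPiece (cfLimitSet F) ((1 / B ^ 2) ^ 2 / (2 * B ^ 2)) x g q u) :
    ∃ g' q' u', CFPiece (cfLimitSet F) ((1 / B ^ 2) ^ 2 / (2 * B ^ 2)) x g' q' u' ∧
      1 / B ^ 2 ≤ u'.re ∧ ‖q‖ * (1 + u.re) ≤ ‖q'‖ ∧ ‖q'‖ ≤ ‖q‖ * B := by
  obtain ⟨x', hx', hgx⟩ := h.mem
  obtain ⟨e, he, w, hw, hxw⟩ := cfLimitSet_cover hFE hB hB1 hx'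
  obtain ⟨h1, h2, h3⟩ := cf_add_bounds hFE hB he h.u_mem
  have hu0 := (cfDisk_bounds h.u_mem).1
  have h4 : 1 + u.re ≤ ‖e + u‖ := h1.trans (Complex.re_le_norm _)
  have hφ : ∀ z ∈ cfDisk, (e + z)⁻¹ ∈ cfDisk := fun z hz =>
    cf_inv_mem (by linarith [(cf_add_bounds hFE hB he hz).1, (cfDisk_bounds hz).1])
  have hq := h.one_le
  have hq' : 1 ≤ ‖q‖ * ‖e + u‖ := by nlinarith
  have hBp : 0 < B := by linarith
  refine ⟨fun z => g (e + z)⁻¹, q * (e + u), (e + u)⁻¹, ⟨?_, ?_, ?_, ?_, ?_⟩, ?_, ?_, ?_⟩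
  · intro z hz w hw
    have hz0 := (cf_add_bounds hFE hB he hz).2.2
    have hw0 := (cf_add_bounds hFE hB he hw).2.2
    have key := h.dist_eq _ (hφ z hz) _ (hφ w hw)
    -- both denominators are multiplied by `e + z`, resp. `e + w`
    have hA : ∀ t : ℂ, e + t ≠ 0 →
        ‖e + u‖ * ‖1 + (e + u)⁻¹ * t‖ = ‖e + t‖ * ‖1 + u * (e + t)⁻¹‖ := by
      intro t ht
      rw [← norm_mul, ← norm_mul]
      congr 1
      field_simp
      ring
    have hd : ‖z - w‖ = ‖(e + z)⁻¹ - (e + w)⁻¹‖ * (‖e + z‖ * ‖e + w‖) := by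
      rw [← norm_mul, ← norm_mul, norm_sub_rev]
      congr 1
      field_simp
      ring
    rw [hd, ← key, norm_mul]
    linear_combination ‖g (e + z)⁻¹ - g (e + w)⁻¹‖ * ‖q‖ ^ 2 *
      (‖e + u‖ * ‖1 + (e + u)⁻¹ * w‖ * hA z hz0 +
        ‖e + z‖ * ‖1 + u * (e + z)⁻¹‖ * hA w hw0)
  · exact cf_inv_mem (by linarith)
  · rw [norm_mul]; exact hq'
  · exact ⟨w, hw, by rw [← hgx, hxw]⟩
  · intro y hy
    have hqpos : 0 < ‖q‖ := by linarith
    have hqq : ‖q‖ ^ 2 ≤ ‖q * (e + u)‖ ^ 2 := by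
      rw [norm_mul]
      gcongr
      nlinarith
    rcases h.gap y hy with ⟨y', hy', rfl⟩ | hfar
    · obtain ⟨e', he', y'', hy'', rfl⟩ := cfLimitSet_cover hFE hB hB1 hy'
      by_cases hee : e' = e
      · left
        exact ⟨y'', hy'', by rw [hee]⟩
      · right
        intro p hp
        have hgap := cf_gap hFE hB hB1 he he' hee hy'' hp
        have hD1 := cfLimitSet_subset hFE hy'
        have hD2 := hφ p (cfLimitSet_subset hFE hp)
        have key := h.dist_eq _ hD1 _ hD2
        obtain ⟨l1, m1⟩ := cfDisk_distortion h.u_mem hD1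
        obtain ⟨l2, m2⟩ := cfDisk_distortion h.u_mem hD2
        refine (div_le_div_of_nonneg_left (by positivity) (by positivity) hqq).trans ?_
        rw [div_le_iff₀ (by positivity)]
        have hprod : ‖1 + u * (e' + y'')⁻¹‖ * ‖1 + u * (e + p)⁻¹‖ ≤ 2 * 2 := by gcongr
        have hle : ‖(e' + y'')⁻¹ - (e + p)⁻¹‖ ≤
            ‖g (e' + y'')⁻¹ - g (e + p)⁻¹‖ * (‖q‖ ^ 2 * (2 * 2)) := by
          rw [← key]; gcongr
        have heq : 2 * (1 / B ^ 2) ^ 2 / B ^ 2 = 4 * ((1 / B ^ 2) ^ 2 / (2 * B ^ 2)) := by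
          field_simp
          ring
        rw [heq] at hgap
        linarith
    · right
      intro p hp
      exact (div_le_div_of_nonneg_left (by positivity) (by positivity) hqq).trans
        (hfar _ (cfLimitSet_inv_mem hFE hB he hp))
  · exact cf_inv_re (by linarith) zero_le_one h2 h3
  · rw [norm_mul]; gcongr
  · rw [norm_mul]; gcongr

/-- There are pieces around every point of the limit set at every scale `T`. -/
lemma cf_exists_piece (hFE : F ⊆ Egauss) (hB : ∀ e ∈ F, ‖e‖ + 1 ≤ B) (hB1 : 1 ≤ B) {x : ℂ}
    (hx : x ∈ cfLimitSet F) {T : ℝ} (hT : 1 ≤ T) :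
    ∃ g q u, CFPiece (cfLimitSet F) ((1 / B ^ 2) ^ 2 / (2 * B ^ 2)) x g q u ∧
      T < ‖q‖ ^ 2 ∧ ‖q‖ ^ 2 ≤ T * B ^ 2 := by
  set η := 1 / B ^ 2 with hη
  have hBp : 0 < B := by linarith
  have hη0 : 0 < η := by positivity
  -- Lengthening the word multiplies `|q|` by a factor in `[1 + η, B]` until `|q|² > T`.
  have main : ∀ n : ℕ, ∃ g q u, CFPiece (cfLimitSet F) (η ^ 2 / (2 * B ^ 2)) x g q u ∧
      ((η ≤ u.re ∧ (1 + η) ^ n ≤ ‖q‖ ∧ ‖q‖ ^ 2 ≤ T) ∨ (T < ‖q‖ ^ 2 ∧ ‖q‖ ^ 2 ≤ T * B ^ 2)) := by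
    intro n
    induction n with
    | zero =>
      obtain ⟨g, q, u, hP, hu, hq1, hq2⟩ := cfPiece_step hFE hB hB1 (cfPiece_id hx)
      refine ⟨g, q, u, hP, ?_⟩
      rcases le_or_gt (‖q‖ ^ 2) T with h | h
      · exact Or.inl ⟨hu, by simpa using hP.one_le, h⟩
      · refine Or.inr ⟨h, ?_⟩
        rw [norm_one, one_mul] at hq2
        calc ‖q‖ ^ 2 ≤ B ^ 2 := by gcongr
          _ ≤ T * B ^ 2 := le_mul_of_one_le_left (by positivity) hT
    | succ n ih =>
      obtain ⟨g, q, u, hP, ⟨hu, hn, hqT⟩ | hdone⟩ := ih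
      · obtain ⟨g', q', u', hP', hu', hq1, hq2⟩ := cfPiece_step hFE hB hB1 hP
        refine ⟨g', q', u', hP', ?_⟩
        rcases le_or_gt (‖q'‖ ^ 2) T with h | h
        · refine Or.inl ⟨hu', ?_, h⟩
          rw [pow_succ]
          refine le_trans ?_ hq1
          gcongr
        · refine Or.inr ⟨h, ?_⟩
          calc ‖q'‖ ^ 2 ≤ (‖q‖ * B) ^ 2 := by gcongr
            _ = ‖q‖ ^ 2 * B ^ 2 := by ring
            _ ≤ T * B ^ 2 := by gcongr
      · exact ⟨g, q, u, hP, Or.inr hdone⟩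
  obtain ⟨n, hn⟩ := pow_unbounded_of_one_lt T (by linarith : 1 < 1 + η)
  obtain ⟨g, q, u, hP, ⟨-, h1, h2⟩ | h⟩ := main n
  · have := hP.one_le
    nlinarith
  · exact ⟨g, q, u, hP, h⟩
end

/-! ### From uniform disconnectedness to directed porosity -/

/-- A hole in direction `v` next to `x`: a piece `P` of `A` near `x`, far from the rest of `A`,
produces one by the intermediate value theorem. -/
lemma le_porDir_of_piece {A P : Set ℂ} {x v : ℂ} {r c : ℝ} (hv : ‖v‖ = 1) (hr : 0 < r)
    (hc : 0 ≤ c) (hc4 : c ≤ 1 / 4) (hxP : x ∈ P) (hP : ∀ p ∈ P, ‖x - p‖ ≤ r / 4)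
    (hgap : ∀ y ∈ A, y ∈ P ∨ ∀ p ∈ P, 2 * (c * r) ≤ ‖y - p‖) : c ≤ porDir v A x r := by
  have hcont : Continuous fun t : ℝ => infDist (x + t • v) P := by
    have := Metric.continuous_infDist_pt P
    fun_prop
  obtain ⟨t, ⟨ht0, ht1⟩, ht⟩ : c * r ∈ (fun t : ℝ => infDist (x + t • v) P) '' Icc 0 (r / 2) := by
    refine intermediate_value_Icc (by linarith) hcont.continuousOn ⟨?_, ?_⟩
    · simp only [zero_smul, add_zero, infDist_zero_of_mem hxP]
      positivity
    · refine (le_infDist ⟨x, hxP⟩).mpr fun p hp => ?_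
      have h1 := hP p hp
      have h2 : ‖(r / 2) • v‖ = r / 2 := by
        rw [norm_smul, hv, mul_one, Real.norm_of_nonneg (by linarith)]
      have h3 : ‖(r / 2) • v‖ ≤ ‖x + (r / 2) • v - p‖ + ‖x - p‖ := by
        have : (r / 2) • v = (x + (r / 2) • v - p) - (x - p) := by ring
        calc ‖(r / 2) • v‖ = ‖(x + (r / 2) • v - p) - (x - p)‖ := by rw [← this]
          _ ≤ _ := norm_sub_le _ _
      rw [dist_eq_norm]
      nlinarith
  have ht : infDist (x + t • v) P = c * r := ht
  refine le_csSup ⟨1, ?_⟩ ⟨hc, t, ?_⟩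
  · -- a ball contained in another one has at most its radius
    rintro d ⟨-, s, hs⟩
    by_contra! hd
    have hmem : ∀ a : ℂ, ‖a‖ = r → x + s • v + a ∈ ball x r := fun a ha =>
      (hs (by rw [mem_ball, dist_eq_norm, add_sub_cancel_left, ha]; nlinarith)).1
    have hrv : ‖r • v‖ = r := by rw [norm_smul, hv, mul_one, Real.norm_of_nonneg hr.le]
    have h1 := mem_ball.mp (hmem (r • v) hrv)
    have h2 := mem_ball.mp (hmem (-(r • v)) (by rw [norm_neg, hrv]))
    have h3 := dist_triangle_right (x + s • v + r • v) (x + s • v + -(r • v)) x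
    have h4 : dist (x + s • v + r • v) (x + s • v + -(r • v)) = 2 * r := by
      rw [dist_eq_norm]
      have : x + s • v + r • v - (x + s • v + -(r • v)) = (2 : ℝ) • (r • v) := by
        rw [two_smul]; ring
      rw [this, norm_smul, hrv]; norm_num
    linarith
  · intro y hy
    rw [mem_ball] at hy
    refine ⟨?_, fun hyA => ?_⟩
    · rw [mem_ball]
      have h1 : dist (x + t • v) x = t := by
        rw [dist_eq_norm, add_sub_cancel_left, norm_smul, hv, mul_one, Real.norm_of_nonneg ht0]
      have h2 := dist_triangle y (x + t • v) x
      nlinarith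
    · rcases hgap y hyA with hyP | hfar
      · have := infDist_le_dist_of_mem (x := x + t • v) hyP
        rw [dist_comm] at this
        linarith
      · obtain ⟨p, hp, hpd⟩ := (infDist_lt_iff (x := x + t • v)
          (r := 2 * (c * r) - dist y (x + t • v)) ⟨x, hxP⟩).mp (by linarith)
        have h1 := hfar p hp
        rw [← dist_eq_norm] at h1
        linarith [dist_triangle y (x + t • v) p]

/-- For a finite alphabet `F ⊆ E` with at least two elements, the limit
set `J_F` of the complex continued fraction system is `v`-directed porous for every unit
vector `v` of `ℂ ≅ ℝ²`. -/
theorem stmt12 (F : Set ℂ) (hFE : F ⊆ Egauss) (hfin : F.Finite) (hnt : F.Nontrivial) :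
    ∀ v : ℂ, ‖v‖ = 1 → DirectedPorous v (cfLimitSet F) := by
  intro v hv
  obtain ⟨R, hR, hFR⟩ := hfin.isBounded.exists_pos_norm_le
  obtain ⟨B, hBR⟩ : ∃ B, B = R + 1 := ⟨_, rfl⟩
  have hB1 : 1 ≤ B := by linarith
  have hB : ∀ e ∈ F, ‖e‖ + 1 ≤ B := fun e he => by linarith [hFR e he]
  have hBp : 0 < B := by linarith
  obtain ⟨δ, hδ⟩ : ∃ δ, δ = (1 / B ^ 2) ^ 2 / (2 * B ^ 2) := ⟨_, rfl⟩
  have hδ0 : 0 < δ := by rw [hδ]; positivity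
  have hδ1 : δ ≤ 1 := by
    have h1 : 1 / B ^ 2 ≤ 1 := by rw [div_le_one (by positivity)]; nlinarith
    have h2 : (1 / B ^ 2) ^ 2 ≤ 1 := pow_le_one₀ (by positivity) h1
    rw [hδ, div_le_one (by positivity)]
    nlinarith
  have hc : δ / (16 * B ^ 2) ≤ 1 / 16 := by
    rw [div_le_iff₀ (by positivity)]
    nlinarith
  refine ⟨δ / (16 * B ^ 2), ⟨by positivity, by linarith⟩, 1, one_pos, ?_⟩
  rintro x hx r ⟨hr0, hr1⟩
  -- pieces with `|q|² > 8 / r` have diameter at most `2 / |q|² < r / 4`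
  obtain ⟨g, q, u, hP, hq1, hq2⟩ := cf_exists_piece hFE hB hB1 hx (T := 8 / r)
    (by rw [le_div_iff₀ hr0]; linarith)
  rw [← hδ] at hP
  have hqp : 0 < ‖q‖ := by linarith [hP.one_le]
  refine le_porDir_of_piece (P := g '' cfLimitSet F) hv hr0 (by positivity) (by linarith)
    hP.mem ?_ ?_
  · rintro _ ⟨p, hp, rfl⟩
    obtain ⟨x', hx', rfl⟩ := hP.mem
    have h1 := cfLimitSet_subset hFE hx'
    have h2 := cfLimitSet_subset hFE hp
    have key := hP.dist_eq _ h1 _ h2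
    have l1 := (cfDisk_distortion hP.u_mem h1).1
    have l2 := (cfDisk_distortion hP.u_mem h2).1
    have hd : ‖x' - p‖ ≤ 1 := by
      have e1 := cfLimitSet_interior hFE hB hB1 hx'
      have e2 := cfLimitSet_interior hFE hB hB1 hp
      have e3 : ‖x' - p‖ ≤ ‖x' - 1 / 2‖ + ‖p - 1 / 2‖ := by
        have : x' - p = (x' - 1 / 2) - (p - 1 / 2) := by ring
        rw [this]; exact norm_sub_le _ _
      linarith [sq_nonneg (1 / B ^ 2)]
    have h3 : ‖g x' - g p‖ * (8 / r * (3 / 4 * (3 / 4))) ≤ 1 := by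
      refine le_trans ?_ (key.le.trans hd)
      gcongr
    have h4 : ‖g x' - g p‖ * (8 / r * (3 / 4 * (3 / 4))) = ‖g x' - g p‖ * (9 / 2) / r := by
      ring
    rw [h4, div_le_one hr0] at h3
    linarith
  · intro y hy
    refine (hP.gap y hy).imp_right ?_
    rintro hfar _ ⟨p, hp, rfl⟩
    refine le_trans ?_ (hfar p hp)
    calc 2 * (δ / (16 * B ^ 2) * r) = δ / (8 / r * B ^ 2) := by field_simp; norm_num
      _ ≤ δ / ‖q‖ ^ 2 := by gcongr
end

section
/- Let I ⊆ E. If closure(J_I) is porous in ℂ, then the upper box dimension of I is strictly less than 2, where the upper box dimension is BD(I) = limsup_{R→∞} sup{ log #(I ∩ Q) / log R : Q = Q(z,R) for some z ∈ ℂ with I ∩ Q(z,R) ≠ ∅ }, Q(z,R) = { w ∈ ℂ : max(|Re(w−z)|, |Im(w−z)|) ≤ R/2 } denotes the closed axis-parallel square of center z and side length R, and the limsup is taken as R → ∞ over the reals. -/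
/-!
The set `I` inherits, at large scales, the porosity of the closure `A` of its limit set, and a set of
Gaussian integers that is porous at large scales has box dimension less than `2`.

For a letter `e` of modulus at least `3`, the fixed point `x = 1/(e+x)` of `φ_e` belongs to the limit
set and `‖x‖ ≤ 1`, so `1/x` is within `1` of `e` (`exists_fixed_mem`). Let `R` be large with
`4R ≤ ‖e‖`. The inversion `w ↦ 1/w` maps the ball of radius about `R/‖e‖²` around `x` into the ball of
radius `R` around `1/x`, with distortion bounded by absolute constants. A hole of `A` in the former ball
therefore becomes a hole of `I` in the latter, of radius at least `cR` for a fixed `c > 0`; the error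
`1` between letters and reciprocals is negligible for large `R` (`alphabet_hole`).

Consequently, if `K` is large and a square of large side `L` is cut into `K²` cells, one of the cells
contains no letter of modulus at least `3` (`empty_cell`): the square contains points of modulus at
least `L/4`, so the restriction `4R ≤ ‖e‖` is harmless for `R = L/32`. Iterating, a square of side
`K^n L₀` contains at most `(K²-1)^n B` letters (`count_bound`), whence
`log #(I ∩ Q(z,R)) ≤ C + s log R` with `s = log (K²-1) / log K < 2`, uniformly in `z`
(`log_count_bound`).
-/

open Metric Set Filter

/-- The closed axis-parallel square of center `z` and side length `R` in `ℂ`. -/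
def sqC (z : ℂ) (R : ℝ) : Set ℂ := {w | max |(w - z).re| |(w - z).im| ≤ R / 2}

/-! ### Points of the limit set close to the reciprocals of the letters -/

lemma cfComp_const (e : ℂ) (m : ℕ) :
    cfComp (fun _ => e) m = (fun z : ℂ => (e + z)⁻¹)^[m] := by
  induction m with
  | zero => simp [cfComp]
  | succ k ih =>
    rw [Function.iterate_succ', ← ih]
    simp [cfComp]

/-- For a letter `e` with `‖e‖ ≥ 3` the map `z ↦ 1/(e+z)` sends the closed unit disk into itself
and contracts it by the factor `1/4`; its fixed point is coded by the constant word `e, e, e, …`. -/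
lemma exists_fixed_mem {I : Set ℂ} {e : ℂ} (he : e ∈ I) (h3 : 3 ≤ ‖e‖) :
    ∃ z ∈ cfLimitSet I, ‖z‖ ≤ 1 ∧ z = (e + z)⁻¹ := by
  set f : ℂ → ℂ := fun z => (e + z)⁻¹ with hf
  have hlow : ∀ z : ℂ, ‖z‖ ≤ 1 → 2 ≤ ‖e + z‖ := by
    intro z hz
    have := norm_sub_le_norm_add e z
    linarith
  have hmaps : Set.MapsTo f (Metric.closedBall 0 1) (Metric.closedBall 0 1) := by
    intro z hz
    simp only [mem_closedBall, dist_zero_right] at hz ⊢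
    have := hlow z hz
    rw [hf, norm_inv]
    exact inv_le_one_of_one_le₀ (by linarith)
  have hcontr : ContractingWith (1 / 2) (hmaps.restrict f _ _) := by
    refine ⟨by norm_num, LipschitzWith.of_dist_le_mul ?_⟩
    rintro ⟨z, hz⟩ ⟨w, hw⟩
    simp only [mem_closedBall, dist_zero_right] at hz hw
    have h1 := hlow z hz
    have h2 := hlow w hw
    have hz0 : e + z ≠ 0 := norm_pos_iff.1 (by linarith)
    have hw0 : e + w ≠ 0 := norm_pos_iff.1 (by linarith)
    rw [Subtype.dist_eq, Subtype.dist_eq]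
    simp only [Set.MapsTo.val_restrict_apply, hf]
    rw [dist_inv_inv₀ hz0 hw0, dist_add_left, div_le_iff₀ (by positivity)]
    have h4 : (2 : ℝ) ≤ ‖e + z‖ * ‖e + w‖ := by nlinarith
    have hd : 0 ≤ dist z w := dist_nonneg
    push_cast
    nlinarith
  obtain ⟨z, hzmem, hfix, hlim, -⟩ := hcontr.exists_fixedPoint'
    (Metric.isClosed_closedBall.isComplete) hmaps (x := 0) (by simp) (edist_ne_top _ _)
  refine ⟨z, ⟨fun _ => e, fun _ => he, ?_⟩, by simpa using hzmem, hfix.symm⟩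
  simpa only [cfComp_const] using hlim

/-! ### From holes of the limit set to holes of the alphabet -/

/-- A lower bound `c` on the porosity, which is a supremum, gives an actual hole after halving `c`.
As `c / 2 * r > 0`, the centre of the hole lies in the ball `B(x,r)` itself. -/
lemma exists_hole {A : Set ℂ} {x : ℂ} {r c : ℝ} (hc : 0 < c) (hr : 0 < r)
    (h : c ≤ por A x r) :
    ∃ y : ℂ, dist y x < r ∧ ∀ a ∈ A, c / 2 * r ≤ dist a y := by
  have h0 : (0 : ℝ) ∈ {c : ℝ | 0 ≤ c ∧ ∃ y : ℂ, Metric.ball y (c * r) ⊆ Metric.ball x r \ A} :=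
    ⟨le_rfl, x, by simp⟩
  obtain ⟨d, ⟨-, y, hy⟩, hcd⟩ := exists_lt_of_lt_csSup ⟨0, h0⟩
    (show c / 2 < sSup _ from lt_of_lt_of_le (by linarith) h)
  have hd : 0 < d := by linarith
  refine ⟨y, (hy (Metric.mem_ball_self (by positivity))).1, fun a ha => ?_⟩
  by_contra! hlt
  exact (hy (Metric.mem_ball.2 (hlt.trans (by gcongr)))).2 ha

/-- The alphabet inherits porosity at large scales: near a letter `e` and at every scale `R`
between `R₁` and `‖e‖ / 4` there is a ball of radius `c * R` free of letters of modulus at least `3`.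
A hole of the closure of the limit set near `1/e`, at scale `R / ‖e‖ ^ 2`, is carried by the inversion
`w ↦ 1/w` to a hole near `e`, since every large letter `e'` lies within `1` of the reciprocal of a
point of the limit set. -/
lemma alphabet_hole {I : Set ℂ} (hpor : Porous (closure (cfLimitSet I))) :
    ∃ R₁ ≥ (10 : ℝ), ∃ c > (0 : ℝ), ∀ R ≥ R₁, ∀ e ∈ I, 3 ≤ ‖e‖ → 4 * R ≤ ‖e‖ →
      ∃ v : ℂ, ‖v - e‖ ≤ R + 1 ∧ ∀ e' ∈ I, 3 ≤ ‖e'‖ → c * R ≤ ‖e' - v‖ := by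
  obtain ⟨c, ⟨hc0, hc1⟩, r₀, hr₀, hp⟩ := hpor
  refine ⟨max 10 (max (36 / c + 1) (1 / r₀)), le_max_left _ _, c / 36, by positivity, ?_⟩
  intro R hR e he he3 heR
  have hR10 : 10 ≤ R := (le_max_left _ _).trans hR
  have hRc : 36 < c * R := by
    have : 36 / c + 1 ≤ R := ((le_max_left _ _).trans (le_max_right _ _)).trans hR
    have h2 : 36 / c < R := by linarith
    rwa [div_lt_iff₀ hc0, mul_comm] at h2
  have hRr : 1 ≤ R * r₀ := by
    have : 1 / r₀ ≤ R := ((le_max_right _ _).trans (le_max_right _ _)).trans hR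
    rwa [div_le_iff₀ hr₀] at this
  obtain ⟨x, hxJ, hx1, hxe⟩ := exists_fixed_mem he he3
  set u := e + x with hu
  set U := ‖u‖ with hU
  have hU3 : 3 * R ≤ U := by
    have := norm_sub_le_norm_add e x
    linarith
  have hUpos : 0 < U := by linarith
  have hu0 : u ≠ 0 := norm_pos_iff.1 hUpos
  have hxn : ‖x‖ = U⁻¹ := by rw [hxe, norm_inv]
  have hxinv : x⁻¹ = u := by rw [hxe, inv_inv]
  have hx0 : x ≠ 0 := by rw [hxe]; exact inv_ne_zero hu0
  -- On `B(x, r)` the inversion expands by at most `2 * U ^ 2`, so its image lies in `B(u, R)`;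
  -- and `r < r₀` because `U ≥ R` and `R ≥ 1 / r₀`.
  set r := R / (2 * U ^ 2) with hr
  have hrU : r * (2 * U ^ 2) = R := div_mul_cancel₀ _ (by positivity)
  have hrpos : 0 < r := by positivity
  have hrlt : r < r₀ := by
    rw [hr, div_lt_iff₀ (by positivity)]
    nlinarith [mul_le_mul hU3 hU3 (by linarith) hUpos.le]
  obtain ⟨y, hyx, hyA⟩ := exists_hole hc0 hrpos (hp x (subset_closure hxJ) r ⟨hrpos, hrlt⟩)
  rw [dist_eq_norm] at hyx
  have hylow : (2 * U)⁻¹ ≤ ‖y‖ := by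
    have h1 := norm_sub_norm_le x y
    rw [norm_sub_rev, hxn] at h1
    have h2 : r ≤ (2 * U)⁻¹ := by
      rw [hr, div_le_iff₀ (by positivity)]
      have : (2 * U)⁻¹ * (2 * U ^ 2) = U := by field_simp
      linarith
    have h3 : U⁻¹ = (2 * U)⁻¹ + (2 * U)⁻¹ := by field_simp; norm_num
    linarith
  have hypos : 0 < ‖y‖ := lt_of_lt_of_le (by positivity) hylow
  have hy0 : y ≠ 0 := norm_pos_iff.1 hypos
  have hvU : ‖y⁻¹‖ ≤ 2 * U := by
    rw [norm_inv]
    exact inv_le_of_inv_le₀ (by positivity) hylow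
  have hvu : ‖y⁻¹ - u‖ ≤ R := by
    have h1 : y⁻¹ - u = (x - y) * y⁻¹ * u := by
      rw [← hxinv]; field_simp
    rw [h1, norm_mul, norm_mul, norm_sub_rev, ← hrU]
    calc ‖y - x‖ * ‖y⁻¹‖ * ‖u‖ ≤ r * (2 * U) * U := by gcongr
      _ = r * (2 * U ^ 2) := by ring
  have hvlow : 2 * U / 3 ≤ ‖y⁻¹‖ := by
    have := norm_sub_norm_le u y⁻¹
    rw [norm_sub_rev] at this
    linarith
  refine ⟨y⁻¹, ?_, ?_⟩
  · have h1 : y⁻¹ - e = (y⁻¹ - u) + x := by rw [hu]; ring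
    rw [h1]
    exact (norm_add_le _ _).trans (add_le_add hvu hx1)
  · intro e' he' he3'
    by_contra! hlt
    -- A letter too close to `y⁻¹` puts a nearby point of the limit set inside the hole centred at `y`.
    obtain ⟨x', hxJ', hx1', hxe'⟩ := exists_fixed_mem he' he3'
    have hfar := hyA x' (subset_closure hxJ')
    set u' := e' + x' with hu'
    have hdist : ‖u' - y⁻¹‖ < c / 36 * R + 1 := by
      have h1 : u' - y⁻¹ = (e' - y⁻¹) + x' := by rw [hu']; ring
      rw [h1]
      exact (norm_add_le _ _).trans_lt (add_lt_add_of_lt_of_le hlt hx1')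
    have hu'low : U / 3 ≤ ‖u'‖ := by
      have h1 := norm_sub_norm_le y⁻¹ u'
      rw [norm_sub_rev] at h1
      have : c * R ≤ R := by nlinarith
      linarith
    have hu'0 : u' ≠ 0 := norm_pos_iff.1 (by linarith)
    have hprod : 2 * U ^ 2 / 9 ≤ ‖u'‖ * ‖y⁻¹‖ := by
      calc 2 * U ^ 2 / 9 = (U / 3) * (2 * U / 3) := by ring
        _ ≤ _ := by gcongr
    have heq : ‖u' - y⁻¹‖ = dist x' y * (‖u'‖ * ‖y⁻¹‖) := by
      rw [dist_comm, dist_eq_norm, ← norm_mul, ← norm_mul, hxe']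
      congr 1
      field_simp
    have : c / 2 * r * (2 * U ^ 2 / 9) ≤ ‖u' - y⁻¹‖ := by
      rw [heq]; gcongr
    have h5 : c / 2 * r * (2 * U ^ 2 / 9) = c * R / 18 := by rw [← hrU]; ring
    linarith

/-! ### Squares and their subdivision -/

lemma gauss_count (L : ℝ) :
    ∃ B : ℕ, ∀ z : ℂ, (Egauss ∩ sqC z L).Finite ∧ (Egauss ∩ sqC z L).ncard ≤ B := by
  have hcard : ∀ x : ℝ, (Finset.Icc ⌈x - L / 2⌉ ⌊x + L / 2⌋).card ≤ ⌈L⌉₊ + 1 := by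
    intro x
    rw [Int.card_Icc, Int.toNat_le]
    have h1 := Int.floor_le (x + L / 2)
    have h2 := Int.le_ceil (x - L / 2)
    have h3 := Nat.le_ceil L
    have : ((⌊x + L / 2⌋ + 1 - ⌈x - L / 2⌉ : ℤ) : ℝ) ≤ (((⌈L⌉₊ + 1 : ℕ) : ℤ) : ℝ) := by
      push_cast; linarith
    exact_mod_cast this
  refine ⟨(⌈L⌉₊ + 1) * (⌈L⌉₊ + 1), fun z => ?_⟩
  set F := Finset.Icc ⌈z.re - L / 2⌉ ⌊z.re + L / 2⌋ ×ˢ Finset.Icc ⌈z.im - L / 2⌉ ⌊z.im + L / 2⌋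
  set g : ℤ × ℤ → ℂ := fun p => (p.1 : ℂ) + (p.2 : ℂ) * Complex.I with hg
  have hsub : Egauss ∩ sqC z L ⊆ ((F.image g : Finset ℂ) : Set ℂ) := by
    rintro w ⟨⟨m, n, -, rfl⟩, hw⟩
    simp only [sqC, Set.mem_ofPred_eq, max_le_iff, abs_le] at hw
    simp at hw
    rw [Finset.coe_image]
    refine ⟨(m, n), ?_, rfl⟩
    simp only [F, Finset.coe_product, Set.mem_prod, Finset.coe_Icc, Set.mem_Icc, Int.ceil_le,
      Int.le_floor]
    refine ⟨⟨?_, ?_⟩, ?_, ?_⟩ <;> linarith [hw.1.1, hw.1.2, hw.2.1, hw.2.2]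
  refine ⟨(Finset.finite_toSet _).subset hsub, ?_⟩
  calc _ ≤ ((F.image g : Finset ℂ) : Set ℂ).ncard :=
        Set.ncard_le_ncard hsub (Finset.finite_toSet _)
    _ = (F.image g).card := Set.ncard_coe_finset _
    _ ≤ F.card := Finset.card_image_le
    _ ≤ _ := by
      rw [Finset.card_product]
      exact Nat.mul_le_mul (hcard _) (hcard _)

lemma interval_grid {K : ℕ} (hK : 0 < K) {L : ℝ} (hL : 0 < L) (a t : ℝ) (h : |t - a| ≤ L / 2) :
    ∃ i : Fin K, |t - (a - L / 2 + ((i : ℕ) + 1 / 2) * (L / K))| ≤ L / K / 2 := by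
  rw [abs_le] at h
  have hK' : (0 : ℝ) < K := by exact_mod_cast hK
  set d := L / K with hd
  have hdpos : 0 < d := by positivity
  have hdK : d * K = L := div_mul_cancel₀ _ hK'.ne'
  set s := (t - a + L / 2) / d with hs
  have hsd : s * d = t - a + L / 2 := div_mul_cancel₀ _ hdpos.ne'
  have hs0 : 0 ≤ s := div_nonneg (by linarith) hdpos.le
  have hsK : s ≤ K := by
    rw [hs, div_le_iff₀ hdpos]; linarith
  obtain ⟨i, hi, h1, h2⟩ : ∃ i < K, (i : ℝ) ≤ s ∧ s ≤ i + 1 := by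
    rcases hsK.lt_or_eq with h | h
    · exact ⟨⌊s⌋₊, (Nat.floor_lt hs0).2 h, Nat.floor_le hs0, (Nat.lt_floor_add_one s).le⟩
    -- The right endpoint `s = K` belongs to the last cell.
    · refine ⟨K - 1, by omega, ?_, ?_⟩ <;> rw [Nat.cast_sub hK, h] <;> simp
  refine ⟨⟨i, hi⟩, ?_⟩
  have h3 := mul_le_mul_of_nonneg_right h1 hdpos.le
  have h4 := mul_le_mul_of_nonneg_right h2 hdpos.le
  rw [abs_le]
  constructor <;> simp only <;> linarith

/-- The `K ^ 2` closed squares of side `L / K`, with centres `q i`, cover the square of side `L`. -/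
lemma square_grid {K : ℕ} (hK : 0 < K) {L : ℝ} (hL : 0 < L) (z : ℂ) :
    ∃ q : Fin K × Fin K → ℂ, ∀ w ∈ sqC z L, ∃ i, w ∈ sqC (q i) (L / K) := by
  refine ⟨fun i => ⟨z.re - L / 2 + ((i.1 : ℕ) + 1 / 2) * (L / K),
    z.im - L / 2 + ((i.2 : ℕ) + 1 / 2) * (L / K)⟩, fun w hw => ?_⟩
  simp only [sqC, Set.mem_ofPred_eq, max_le_iff, Complex.sub_re, Complex.sub_im] at hw ⊢
  obtain ⟨i, hi⟩ := interval_grid hK hL _ _ hw.1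
  obtain ⟨j, hj⟩ := interval_grid hK hL _ _ hw.2
  exact ⟨(i, j), hi, hj⟩

lemma norm_sub_le_of_mem_sqC {z v w : ℂ} {d : ℝ} (hv : v ∈ sqC z d) (hw : w ∈ sqC z d) :
    ‖v - w‖ ≤ 2 * d := by
  simp only [sqC, Set.mem_ofPred_eq, max_le_iff, Complex.sub_re, Complex.sub_im, abs_le] at hv hw
  refine (Complex.norm_le_abs_re_add_abs_im _).trans ?_
  have h1 : |(v - w).re| ≤ d := by
    rw [Complex.sub_re, abs_le]; constructor <;> linarith [hv.1.1, hv.1.2, hw.1.1, hw.1.2]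
  have h2 : |(v - w).im| ≤ d := by
    rw [Complex.sub_im, abs_le]; constructor <;> linarith [hv.2.1, hv.2.2, hw.2.1, hw.2.2]
  linarith

lemma mem_sqC_of_norm {z w : ℂ} {d : ℝ} (h : ‖w - z‖ ≤ d / 2) : w ∈ sqC z d :=
  max_le ((Complex.abs_re_le_norm _).trans h) ((Complex.abs_im_le_norm _).trans h)

/-! ### Counting letters in squares -/

/-- If `A` has a hole of relative size `c` near each of its points `e` at all scales between
`R₁` and `‖e‖ / 4`, then in a subdivision of a large square into `K ^ 2` cells, with `K` large in terms
of `c`, some cell misses `A`. Otherwise `A` would be `2 * (L / K)`-dense in the square. -/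
lemma empty_cell {A : Set ℂ} {R₁ c : ℝ} (hR₁ : 10 ≤ R₁)
    (h : ∀ R ≥ R₁, ∀ e ∈ A, 4 * R ≤ ‖e‖ →
      ∃ v : ℂ, ‖v - e‖ ≤ R + 1 ∧ ∀ e' ∈ A, c * R ≤ ‖e' - v‖)
    {K : ℕ} (hK16 : 16 ≤ K) (hKc : 64 < c * K) {L : ℝ} (hL : 32 * R₁ ≤ L) (z : ℂ)
    (q : Fin K × Fin K → ℂ) (hq : ∀ w ∈ sqC z L, ∃ i, w ∈ sqC (q i) (L / K)) :
    ∃ i, A ∩ sqC (q i) (L / K) = ∅ := by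
  by_contra! hne
  have hLpos : 0 < L := by linarith
  have hKpos : (0 : ℝ) < K := by
    have : 0 < K := by omega
    exact_mod_cast this
  have hcell : ∀ w ∈ sqC z L, ∃ e ∈ A, ‖e - w‖ ≤ 2 * (L / K) := by
    intro w hw
    obtain ⟨i, hi⟩ := hq w hw
    obtain ⟨e, heA, he⟩ := hne i
    exact ⟨e, heA, norm_sub_le_of_mem_sqC he hi⟩
  have hdiam : L / K ≤ L / 16 := by
    have : (16 : ℝ) ≤ K := by exact_mod_cast hK16
    gcongr
  -- The two points `z ± L / 4` are at distance `L / 2`, so one of them has modulus at least `L / 4`;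
  -- near it there is a letter far enough from the origin for the scale `L / 32`.
  obtain ⟨p, hpz, hp⟩ : ∃ p : ℂ, ‖p - z‖ = L / 4 ∧ L / 4 ≤ ‖p‖ := by
    have hn : ‖((L / 4 : ℝ) : ℂ)‖ = L / 4 := by
      rw [Complex.norm_real, Real.norm_of_nonneg (by positivity)]
    by_cases hcase : L / 4 ≤ ‖z + ((L / 4 : ℝ) : ℂ)‖
    · exact ⟨_, by rw [add_sub_cancel_left, hn], hcase⟩
    · refine ⟨z - ((L / 4 : ℝ) : ℂ), by rw [sub_sub_cancel_left, norm_neg, hn], ?_⟩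
      have h1 := norm_sub_le (z + ((L / 4 : ℝ) : ℂ)) (z - ((L / 4 : ℝ) : ℂ))
      have h2 : (z + ((L / 4 : ℝ) : ℂ)) - (z - ((L / 4 : ℝ) : ℂ)) = 2 * ((L / 4 : ℝ) : ℂ) := by
        ring
      rw [h2, norm_mul, hn] at h1
      norm_num at h1
      push Not at hcase
      push_cast at hcase h1 ⊢
      linarith
  obtain ⟨e, heA, hep⟩ := hcell p (mem_sqC_of_norm (by linarith))
  have hen : 4 * (L / 32) ≤ ‖e‖ := by
    have := norm_sub_norm_le p e
    rw [norm_sub_rev] at this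
    linarith
  obtain ⟨v, hve, hv⟩ := h (L / 32) (by linarith) e heA hen
  have hvz : ‖v - z‖ ≤ L / 2 := by
    have h1 : v - z = (v - e) + (e - p) + (p - z) := by ring
    rw [h1]
    have := norm_add₃_le (a := v - e) (b := e - p) (c := p - z)
    linarith
  obtain ⟨e', he'A, he'⟩ := hcell v (mem_sqC_of_norm hvz)
  have h1 := (hv e' he'A).trans he'
  have h2 : c * (L / 32) * K ≤ 2 * L := by
    calc c * (L / 32) * K ≤ 2 * (L / K) * K := by gcongr
      _ = 2 * L := by field_simp
  nlinarith

/-- One step of the recursion: a square of side `L` with an empty cell holds at most `K ^ 2 - 1`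
times as many points as the bound for squares of side `L / K`. -/
lemma count_step {A : Set ℂ} {K : ℕ} {L : ℝ} {z : ℂ} (q : Fin K × Fin K → ℂ)
    (hq : ∀ w ∈ sqC z L, ∃ i, w ∈ sqC (q i) (L / K)) (i₀ : Fin K × Fin K)
    (hi₀ : A ∩ sqC (q i₀) (L / K) = ∅) {M : ℕ}
    (hM : ∀ z', (A ∩ sqC z' (L / K)).Finite ∧ (A ∩ sqC z' (L / K)).ncard ≤ M) :
    (A ∩ sqC z L).Finite ∧ (A ∩ sqC z L).ncard ≤ (K ^ 2 - 1) * M := by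
  have hsub : A ∩ sqC z L ⊆ ⋃ i ∈ Finset.univ.erase i₀, A ∩ sqC (q i) (L / K) := by
    rintro w ⟨hwA, hw⟩
    obtain ⟨i, hi⟩ := hq w hw
    refine Set.mem_iUnion₂.2 ⟨i, ?_, hwA, hi⟩
    refine Finset.mem_erase.2 ⟨?_, Finset.mem_univ _⟩
    rintro rfl
    exact (Set.eq_empty_iff_forall_notMem.1 hi₀ w) ⟨hwA, hi⟩
  have hfin : (⋃ i ∈ Finset.univ.erase i₀, A ∩ sqC (q i) (L / K)).Finite :=
    (Finset.finite_toSet _).biUnion fun i _ => (hM _).1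
  refine ⟨hfin.subset hsub, (Set.ncard_le_ncard hsub hfin).trans ?_⟩
  refine (Finset.set_ncard_biUnion_le _ _).trans ?_
  refine (Finset.sum_le_card_nsmul _ _ M fun i _ => (hM _).2).trans ?_
  rw [Finset.card_erase_of_mem (Finset.mem_univ _), Finset.card_univ, Fintype.card_prod,
    Fintype.card_fin, smul_eq_mul, sq]

lemma count_bound {I : Set ℂ} (hIE : I ⊆ Egauss) (hpor : Porous (closure (cfLimitSet I))) :
    ∃ K : ℕ, 2 ≤ K ∧ ∃ B : ℕ, ∃ L₀ ≥ (1 : ℝ), ∀ n : ℕ, ∀ z : ℂ,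
      (I ∩ sqC z (K ^ n * L₀)).Finite ∧
      (I ∩ sqC z (K ^ n * L₀)).ncard ≤ (K ^ 2 - 1) ^ n * B := by
  obtain ⟨R₁, hR₁, c, hc, hole⟩ := alphabet_hole hpor
  -- Only finitely many letters have modulus less than `3`; they are counted separately, by `B₂`.
  set A : Set ℂ := {e | e ∈ I ∧ 3 ≤ ‖e‖} with hA
  have hAI : A ⊆ I := fun e he => he.1
  obtain ⟨K, hK⟩ := exists_nat_gt (max 16 (64 / c))
  have hK16 : 16 ≤ K := by
    have : (16 : ℝ) < K := (le_max_left _ _).trans_lt hK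
    exact_mod_cast this.le
  have hKc : 64 < c * K := by
    have : 64 / c < K := (le_max_right _ _).trans_lt hK
    rwa [div_lt_iff₀ hc, mul_comm] at this
  have hKpos : (0 : ℝ) < K := by positivity
  have hK1 : (1 : ℝ) ≤ K := by
    have : 1 ≤ K := by omega
    exact_mod_cast this
  obtain ⟨B₁, hB₁⟩ := gauss_count (32 * R₁)
  obtain ⟨B₂, hB₂⟩ := gauss_count 6
  have hbase : ∀ n : ℕ, ∀ z : ℂ, (A ∩ sqC z (K ^ n * (32 * R₁))).Finite ∧
      (A ∩ sqC z (K ^ n * (32 * R₁))).ncard ≤ (K ^ 2 - 1) ^ n * B₁ := by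
    intro n
    induction n with
    | zero =>
      intro z
      have hsub : A ∩ sqC z (32 * R₁) ⊆ Egauss ∩ sqC z (32 * R₁) :=
        Set.inter_subset_inter_left _ (hAI.trans hIE)
      simpa using And.intro ((hB₁ z).1.subset hsub)
        ((Set.ncard_le_ncard hsub (hB₁ z).1).trans (hB₁ z).2)
    | succ n ih =>
      intro z
      have hL : 32 * R₁ ≤ K ^ (n + 1) * (32 * R₁) :=
        le_mul_of_one_le_left (by linarith) (one_le_pow₀ hK1)
      have hdiv : (K : ℝ) ^ (n + 1) * (32 * R₁) / K = K ^ n * (32 * R₁) := by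
        rw [pow_succ]; field_simp
      obtain ⟨q, hq⟩ := square_grid (by omega : 0 < K)
        (show 0 < (K : ℝ) ^ (n + 1) * (32 * R₁) by linarith) z
      obtain ⟨i, hi⟩ := empty_cell hR₁ (A := A) (c := c)
        (fun R hR e he h4 => by
          obtain ⟨v, hv, hv'⟩ := hole R hR e he.1 he.2 h4
          exact ⟨v, hv, fun e' he' => hv' e' he'.1 he'.2⟩) hK16 hKc hL z q hq
      have := count_step q hq i hi (M := (K ^ 2 - 1) ^ n * B₁) (by rw [hdiv]; exact ih)
      rwa [← mul_assoc (K ^ 2 - 1), ← pow_succ'] at this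
  refine ⟨K, by omega, B₁ + B₂, 32 * R₁, by linarith, fun n z => ?_⟩
  have hsub : I ∩ sqC z (K ^ n * (32 * R₁)) ⊆
      (A ∩ sqC z (K ^ n * (32 * R₁))) ∪ (Egauss ∩ sqC 0 6) := by
    rintro w ⟨hwI, hw⟩
    by_cases h3 : 3 ≤ ‖w‖
    · exact Or.inl ⟨⟨hwI, h3⟩, hw⟩
    · exact Or.inr ⟨hIE hwI, mem_sqC_of_norm (by rw [sub_zero]; linarith)⟩
  have hfin := (hbase n z).1.union (hB₂ 0).1
  refine ⟨hfin.subset hsub, (Set.ncard_le_ncard hsub hfin).trans ?_⟩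
  refine (Set.ncard_union_le _ _).trans ?_
  rw [mul_add]
  refine add_le_add (hbase n z).2 ((hB₂ 0).2.trans ?_)
  have : 1 ≤ K ^ 2 - 1 := by
    have : 16 ^ 2 ≤ K ^ 2 := Nat.pow_le_pow_left hK16 2
    omega
  exact Nat.le_mul_of_pos_left _ (Nat.pow_pos (by omega))

/-- The exponent is `s = log (K ^ 2 - 1) / log K`, obtained by enclosing a square of side `R` in one
of side `K ^ n * L₀` with `n = ⌈log R / log K⌉`. -/
lemma log_count_bound {I : Set ℂ} (hIE : I ⊆ Egauss)
    (hpor : Porous (closure (cfLimitSet I))) :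
    ∃ s C : ℝ, 0 ≤ s ∧ s < 2 ∧ 0 ≤ C ∧ ∃ L₀ ≥ (1 : ℝ), ∀ R ≥ L₀, ∀ z : ℂ,
      Real.log ((I ∩ sqC z R).ncard) ≤ C + s * Real.log R := by
  obtain ⟨K, hK2, B, L₀, hL₀, hcount⟩ := count_bound hIE hpor
  have hKr : (2 : ℝ) ≤ K := by exact_mod_cast hK2
  have hlogK : 0 < Real.log K := Real.log_pos (by linarith)
  have hN : (1 : ℝ) ≤ (K : ℝ) ^ 2 - 1 := by nlinarith
  set N : ℝ := (K : ℝ) ^ 2 - 1 with hNdef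
  have hNcast : ((K ^ 2 - 1 : ℕ) : ℝ) = N := by
    rw [Nat.cast_sub (Nat.one_le_pow _ _ (by omega))]; push_cast; rfl
  have hlogN : 0 ≤ Real.log N := Real.log_nonneg hN
  refine ⟨Real.log N / Real.log K, Real.log (B + 1) + Real.log N, by positivity, ?_, ?_,
    L₀, hL₀, fun R hR z => ?_⟩
  · rw [div_lt_iff₀ hlogK]
    have : Real.log N < Real.log ((K : ℝ) ^ 2) := Real.log_lt_log (by linarith) (by linarith)
    rwa [Real.log_pow] at this
  · have : 0 ≤ Real.log ((B : ℝ) + 1) := Real.log_nonneg (by linarith [(Nat.cast_nonneg B : (0:ℝ) ≤ B)])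
    linarith
  have hR1 : 1 ≤ R := hL₀.trans hR
  have hlogR : 0 ≤ Real.log R := Real.log_nonneg hR1
  set n := ⌈Real.log R / Real.log K⌉₊ with hn
  have hn1 : Real.log R ≤ n * Real.log K := by
    rw [← div_le_iff₀ hlogK]; exact Nat.le_ceil _
  have hn2 : (n : ℝ) ≤ Real.log R / Real.log K + 1 := (Nat.ceil_lt_add_one (by positivity)).le
  have hRK : R ≤ (K : ℝ) ^ n * L₀ := by
    have : R ≤ (K : ℝ) ^ n := by
      rw [← Real.log_le_log_iff (by linarith) (by positivity), Real.log_pow]; exact hn1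
    nlinarith
  have hsub : I ∩ sqC z R ⊆ I ∩ sqC z (K ^ n * L₀) := by
    rintro w ⟨hwI, hw⟩
    exact ⟨hwI, le_trans (show max |(w - z).re| |(w - z).im| ≤ R / 2 from hw) (by linarith)⟩
  have hle := (Set.ncard_le_ncard hsub (hcount n z).1).trans (hcount n z).2
  have hle' : ((I ∩ sqC z R).ncard : ℝ) ≤ N ^ n * (B + 1) := by
    have h1 : ((I ∩ sqC z R).ncard : ℝ) ≤ (((K ^ 2 - 1) ^ n * B : ℕ) : ℝ) := by exact_mod_cast hle
    rw [Nat.cast_mul, Nat.cast_pow, hNcast] at h1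
    have : 0 ≤ N ^ n := by positivity
    linarith
  have hfinal : Real.log (N ^ n * (B + 1)) ≤
      Real.log (B + 1) + Real.log N + Real.log N / Real.log K * Real.log R := by
    rw [Real.log_mul (by positivity) (by positivity), Real.log_pow]
    have := mul_le_mul_of_nonneg_right hn2 hlogN
    have h2 : (Real.log R / Real.log K + 1) * Real.log N =
      Real.log N + Real.log N / Real.log K * Real.log R := by ring
    linarith
  refine le_trans ?_ hfinal
  rcases Nat.eq_zero_or_pos (I ∩ sqC z R).ncard with h0 | h0
  -- An empty intersection gives `Real.log 0 = 0`.
  · rw [h0, Nat.cast_zero, Real.log_zero]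
    exact Real.log_nonneg (one_le_mul_of_one_le_of_one_le (one_le_pow₀ hN)
      (by linarith [(Nat.cast_nonneg B : (0:ℝ) ≤ B)]))
  · exact Real.log_le_log (by exact_mod_cast h0) hle'

/-! ### The box dimension -/

/-- If the closure of `J_I` is porous in `ℂ` then the upper box
dimension of `I`, namely
`limsup_{R→∞} sup{ log #(I ∩ Q(z,R)) / log R : z ∈ ℂ, I ∩ Q(z,R) ≠ ∅ }`,
is strictly less than `2`. -/
theorem stmt15 (I : Set ℂ) (hIE : I ⊆ Egauss)
    (hpor : Porous (closure (cfLimitSet I))) :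
    Filter.limsup
      (fun R : ℝ => sSup {t : ℝ | ∃ z : ℂ, (I ∩ sqC z R).Nonempty ∧
        t = Real.log ((I ∩ sqC z R).ncard) / Real.log R})
      Filter.atTop < 2 := by
  obtain ⟨s, C, hs0, hs2, hC, L₀, hL₀, hbound⟩ := log_count_bound hIE hpor
  have hev : ∀ᶠ R : ℝ in atTop, sSup {t : ℝ | ∃ z : ℂ, (I ∩ sqC z R).Nonempty ∧
      t = Real.log ((I ∩ sqC z R).ncard) / Real.log R} ≤ (s + 2) / 2 := by
    filter_upwards [eventually_ge_atTop L₀,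
      Real.tendsto_log_atTop.eventually_gt_atTop (2 * C / (2 - s))] with R hR hlog
    have hlogpos : 0 < Real.log R := lt_of_le_of_lt (div_nonneg (by linarith) (by linarith)) hlog
    rw [div_lt_iff₀ (by linarith)] at hlog
    refine Real.sSup_le ?_ (by linarith)
    rintro t ⟨z, -, rfl⟩
    rw [div_le_iff₀ hlogpos]
    have := hbound R hR z
    linarith
  have hnonneg : ∀ᶠ R : ℝ in atTop, 0 ≤ sSup {t : ℝ | ∃ z : ℂ, (I ∩ sqC z R).Nonempty ∧
      t = Real.log ((I ∩ sqC z R).ncard) / Real.log R} := by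
    filter_upwards [eventually_ge_atTop 1] with R hR
    refine Real.sSup_nonneg ?_
    rintro t ⟨z, -, rfl⟩
    exact div_nonneg (Real.log_natCast_nonneg _) (Real.log_nonneg hR)
  refine lt_of_le_of_lt (limsup_le_of_le (isCoboundedUnder_le_of_eventually_le _ hnonneg) hev) ?_
  linarith
end
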